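/- arXiv:1810.00684 — 8 statements merged into one kernel-verified Lean document; each statement's English description precedes it below -/
import Mathlib

section
/- Let X and Y be real Banach spaces with dim X ≥ 2 and dim Y ≥ 2. Then the pair (X, Y) fails property (P2); that is, there exists ε > 0 such that for every η > 0 there are a bounded linear operator T : X → Y with ‖T‖ = 1 and a point x₀ ∈ S_X with ‖T(x₀)‖ > 1 − η, such that no x₁ ∈ S_X satisfies both ‖T(x₁)‖ = 1 and ‖x₁ − x₀‖ < ε. -/
/-!
Let `Z` be a two-dimensional quotient of `X` and `J : Z → Y` an injective operator. Among the
operators `A` on `Z` with `‖J ∘ A‖ ≤ 1`, choose one with `|det A|` maximal. Then the points of the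
unit ball of `Z` at which `S = J ∘ A` has norm one span `Z`: if they all lay in the kernel of a
functional `β ≠ 0`, then composing `A` with the map that shrinks `Z` slightly and stretches it
transversally to `ker β` would increase the determinant without violating `‖J ∘ A‖ ≤ 1`.

So `S` has norm one at two points `u` and `v` of the unit ball and there is a functional `f` with
`f u = 0` and `f v = 1`. The operator `S + t • f ⊗ S v` has norm at least `1 + t`, so it can attain
its norm only where `|f| ≥ 1`, while at `u`, far from such points, it almost attains it for small
`t`. Lifting `u` and `v` to almost unit vectors of `X` gives operators on `X`.
-/

open Set Filter Topology Module Metric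

section RankOnePerturbation

variable {X Y : Type*} [NormedAddCommGroup X] [NormedSpace ℝ X]
  [NormedAddCommGroup Y] [NormedSpace ℝ Y] {S : X →L[ℝ] Y} {f : X →L[ℝ] ℝ} {y : Y} {t : ℝ}

theorem norm_add_smul_smulRight_apply_le (S : X →L[ℝ] Y) (f : X →L[ℝ] ℝ) (y : Y) (ht : 0 ≤ t)
    (x : X) : ‖(S + t • f.smulRight y) x‖ ≤ ‖S x‖ + t * (|f x| * ‖y‖) := by
  calc ‖S x + t • f x • y‖ ≤ ‖S x‖ + ‖t • f x • y‖ := norm_add_le _ _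
    _ = ‖S x‖ + t * (|f x| * ‖y‖) := by
      rw [norm_smul, norm_smul, Real.norm_of_nonneg ht, Real.norm_eq_abs]

theorem norm_one_sub_smul_add_smul_smulRight_apply_le_one {x : X} (hSx : ‖S x‖ ≤ 1)
    (hf : |f x| * ‖y‖ ≤ 1) (ht0 : 0 ≤ t) (ht1 : t ≤ 1) :
    ‖(1 - t) • (S + t • f.smulRight y) x‖ ≤ 1 := by
  have ht : 0 ≤ 1 - t := sub_nonneg.2 ht1
  calc ‖(1 - t) • (S + t • f.smulRight y) x‖
      = (1 - t) * ‖(S + t • f.smulRight y) x‖ := by rw [norm_smul, Real.norm_of_nonneg ht]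
    _ ≤ (1 - t) * (‖S x‖ + t * (|f x| * ‖y‖)) := by
      gcongr
      exact norm_add_smul_smulRight_apply_le S f y ht0 x
    _ ≤ (1 - t) * (1 + t * 1) := by gcongr
    _ ≤ 1 := by nlinarith

theorem norm_add_smul_smulRight_le (hS : ‖S‖ ≤ 1) (hy : ‖y‖ = 1) (ht : 0 ≤ t) :
    ‖S + t • f.smulRight y‖ ≤ 1 + t * ‖f‖ := by
  calc ‖S + t • f.smulRight y‖ ≤ ‖S‖ + ‖t • f.smulRight y‖ := norm_add_le _ _
    _ = ‖S‖ + t * ‖f‖ := by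
      rw [norm_smul, ContinuousLinearMap.norm_smulRight_apply, hy, mul_one,
        Real.norm_of_nonneg ht]
    _ ≤ 1 + t * ‖f‖ := by gcongr

theorem one_add_le_norm_add_smul_smulRight (hy : ‖y‖ = 1)
    (hSf : ∀ r > 1, ∃ x, ‖x‖ < r ∧ S x = y ∧ f x = 1) : 1 + t ≤ ‖S + t • f.smulRight y‖ := by
  set T := S + t • f.smulRight y with hT
  have key : ∀ r > 1, 1 + t ≤ ‖T‖ * r := fun r hr => by
    obtain ⟨x, hxr, hSx, hfx⟩ := hSf r hr
    have hTx : T x = (1 + t) • y := by simp [hT, hSx, hfx, add_smul]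
    calc 1 + t ≤ |1 + t| := le_abs_self _
      _ = ‖T x‖ := by rw [hTx, norm_smul, hy, mul_one, Real.norm_eq_abs]
      _ ≤ ‖T‖ * r := T.le_of_opNorm_le_of_le le_rfl hxr.le
  have hlim : Tendsto (fun r : ℝ => ‖T‖ * r) (𝓝[>] 1) (𝓝 ‖T‖) := by
    have hcont : Continuous fun r : ℝ => ‖T‖ * r := by fun_prop
    simpa using (hcont.tendsto 1).mono_left nhdsWithin_le_nhds
  exact ge_of_tendsto hlim (eventually_mem_nhdsWithin.mono key)

theorem one_le_abs_of_norm_add_smul_smulRight_apply_eq (hS : ‖S‖ ≤ 1) (hy : ‖y‖ = 1) (ht : 0 < t)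
    (hSf : ∀ r > 1, ∃ x, ‖x‖ < r ∧ S x = y ∧ f x = 1) {x : X} (hx : ‖x‖ = 1)
    (hTx : ‖(S + t • f.smulRight y) x‖ = ‖S + t • f.smulRight y‖) : 1 ≤ |f x| := by
  have hSx : ‖S x‖ ≤ 1 := by simpa [hx] using S.le_of_opNorm_le hS x
  have hle : 1 + t ≤ 1 + t * |f x| :=
    calc 1 + t ≤ ‖(S + t • f.smulRight y) x‖ :=
          (one_add_le_norm_add_smul_smulRight hy hSf).trans_eq hTx.symm
      _ ≤ ‖S x‖ + t * (|f x| * ‖y‖) := norm_add_smul_smulRight_apply_le S f y ht.le x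
      _ ≤ 1 + t * |f x| := by rw [hy, mul_one]; gcongr
  exact (le_mul_iff_one_le_right ht).1 (by linarith)

theorem exists_pos_lt_inv_one_add_mul (c : ℝ) {b : ℝ} (hb : b < 1) :
    ∃ t : ℝ, 0 < t ∧ b < ((1 + t * c) * (1 + t))⁻¹ := by
  have hcont : ContinuousAt (fun t : ℝ => ((1 + t * c) * (1 + t))⁻¹) 0 :=
    ContinuousAt.inv₀ (by fun_prop) (by norm_num)
  have hnear : ∀ᶠ t in 𝓝[>] (0 : ℝ), b < ((1 + t * c) * (1 + t))⁻¹ :=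
    nhdsWithin_le_nhds (hcont.eventually (lt_mem_nhds (by simpa using hb)))
  exact (eventually_mem_nhdsWithin.and hnear).exists

theorem exists_norm_eq_one_forall_norm_apply_eq_one_imp_one_le_abs (hS : ‖S‖ ≤ 1) (hy : ‖y‖ = 1)
    (hker : ∀ r > 1, ∃ x, ‖x‖ < r ∧ ‖S x‖ = 1 ∧ f x = 0)
    (hSf : ∀ r > 1, ∃ x, ‖x‖ < r ∧ S x = y ∧ f x = 1) {b : ℝ} (hb : b < 1) :
    ∃ (T : X →L[ℝ] Y) (x₀ : X), ‖T‖ = 1 ∧ ‖x₀‖ = 1 ∧ b < ‖T x₀‖ ∧ f x₀ = 0 ∧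
      ∀ x, ‖x‖ = 1 → ‖T x‖ = 1 → 1 ≤ |f x| := by
  obtain ⟨t, ht, hbt⟩ := exists_pos_lt_inv_one_add_mul ‖f‖ hb
  obtain ⟨x, hxt, hSx, hfx⟩ := hker (1 + t) (by linarith)
  set T := S + t • f.smulRight y with hT
  have hT0 : 0 < ‖T‖ := by linarith [one_add_le_norm_add_smul_smulRight (t := t) hy hSf]
  have hx0 : x ≠ 0 := fun h => by simp [h] at hSx
  have hTx : ‖T x‖ = 1 := by simp [hT, hfx, hSx]
  refine ⟨‖T‖⁻¹ • T, ‖x‖⁻¹ • x, norm_smul_inv_norm (𝕜 := ℝ) (norm_pos_iff.1 hT0),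
    norm_smul_inv_norm (𝕜 := ℝ) hx0, ?_, by simp [hfx], fun z hz hTz => ?_⟩
  · calc b < ((1 + t * ‖f‖) * (1 + t))⁻¹ := hbt
      _ ≤ (‖T‖ * ‖x‖)⁻¹ := by
        have := norm_pos_iff.2 hx0
        gcongr
        exact norm_add_smul_smulRight_le hS hy ht.le
      _ = ‖(‖T‖⁻¹ • T) (‖x‖⁻¹ • x)‖ := by simp [norm_smul, hTx, mul_comm]
  · have hTz' : ‖T z‖ = ‖T‖ := by
      rwa [smul_apply, norm_smul, norm_inv, norm_norm,
        inv_mul_eq_one₀ hT0.ne', eq_comm] at hTz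
    exact one_le_abs_of_norm_add_smul_smulRight_apply_eq hS hy ht hSf hz hTz'

end RankOnePerturbation

section MaximalDeterminant

variable {Z Y : Type*} [NormedAddCommGroup Z] [NormedSpace ℝ Z] [FiniteDimensional ℝ Z]
  [NormedAddCommGroup Y] [NormedSpace ℝ Y]

theorem eventually_norm_one_sub_smul_add_smul_smulRight_le_one {S : Z →L[ℝ] Y} (hS : ‖S‖ ≤ 1)
    {β : Z →L[ℝ] ℝ} (hβ : ∀ z, ‖z‖ ≤ 1 → ‖S z‖ = 1 → β z = 0) (y : Y) :
    ∀ᶠ δ in 𝓝[>] (0 : ℝ), ‖(1 - δ) • (S + δ • β.smulRight y)‖ ≤ 1 := by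
  have hSz : ∀ z, ‖z‖ ≤ 1 → ‖S z‖ ≤ 1 := fun z hz => by
    simpa using S.le_of_opNorm_le_of_le hS hz
  have hloc : ∀ z ∈ closedBall (0 : Z) 1, ∀ᶠ p : ℝ × Z in 𝓝 (0, z),
      0 < p.1 → p.1 < 1 → ‖p.2‖ ≤ 1 → ‖(1 - p.1) • (S + p.1 • β.smulRight y) p.2‖ ≤ 1 := by
    intro z hz
    rw [mem_closedBall_zero_iff] at hz
    rcases (hSz z hz).lt_or_eq with hlt | heq
    · have hcont : Continuous fun p : ℝ × Z => ‖(1 - p.1) • (S p.2 + p.1 • β p.2 • y)‖ := by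
        fun_prop
      filter_upwards [hcont.continuousAt.eventually_lt_const (by simpa using hlt)] with p hp _ _ _
      exact hp.le
    · have hcont : Continuous fun p : ℝ × Z => |β p.2| * ‖y‖ := by fun_prop
      have hzero : |β z| * ‖y‖ < 1 := by simp [hβ z hz heq]
      filter_upwards [hcont.continuousAt.eventually_lt_const hzero] with p hp hδ0 hδ1 hz'
      exact norm_one_sub_smul_add_smul_smulRight_apply_le_one (hSz _ hz') hp.le hδ0.le hδ1.le
  have := FiniteDimensional.proper ℝ Z
  have hunif := (isCompact_closedBall (0 : Z) 1).eventually_forall_of_forall_eventually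
    (P := fun δ z => 0 < δ → δ < 1 → ‖z‖ ≤ 1 → ‖(1 - δ) • (S + δ • β.smulRight y) z‖ ≤ 1) hloc
  filter_upwards [nhdsWithin_le_nhds hunif, Ioo_mem_nhdsGT one_pos] with δ hδ hδ01
  refine ContinuousLinearMap.opNorm_le_of_unit_norm zero_le_one fun z hz => ?_
  exact hδ z (by simp [hz]) hδ01.1 hδ01.2 hz.le

theorem det_smul_id_add_smulRight (a : ℝ) (β : Z →L[ℝ] ℝ) (v : Z) :
    (a • (ContinuousLinearMap.id ℝ Z + β.smulRight v)).det = a ^ finrank ℝ Z * (1 + β v) := by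
  have h : ((a • (ContinuousLinearMap.id ℝ Z + β.smulRight v) : Z →L[ℝ] Z) : Z →ₗ[ℝ] Z)
      = a • LinearMap.transvection (β : Z →ₗ[ℝ] ℝ) v := rfl
  rw [ContinuousLinearMap.det, h, LinearMap.det_smul, LinearMap.transvection.det]
  rfl

theorem eventually_one_lt_one_sub_pow_mul (n : ℕ) :
    ∀ᶠ δ in 𝓝[>] (0 : ℝ), 1 < (1 - δ) ^ n * (1 + δ * ((n : ℝ) + 1)) := by
  have hsmall : ∀ᶠ δ in 𝓝 (0 : ℝ), δ < 1 ∧ (n : ℝ) * (δ * (n + 1)) < 1 := by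
    have hcont : Continuous fun δ : ℝ => (n : ℝ) * (δ * (n + 1)) := by fun_prop
    exact (eventually_lt_nhds (zero_lt_one' ℝ)).and
      (hcont.continuousAt.eventually_lt_const (by simp))
  filter_upwards [nhdsWithin_le_nhds hsmall, self_mem_nhdsWithin] with δ ⟨hδ1, hδn⟩ hδ
  rw [mem_Ioi] at hδ
  calc 1 < (1 + n * (1 - δ - 1)) * (1 + δ * (n + 1)) := by nlinarith
    _ ≤ (1 - δ) ^ n * (1 + δ * (n + 1)) := by
      gcongr
      exact one_add_mul_sub_le_pow (by linarith) n

theorem span_norm_apply_eq_one_eq_top_of_isMaxOn_abs_det {J : Z →L[ℝ] Y} {A : Z →L[ℝ] Z}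
    (hA : ‖J ∘L A‖ ≤ 1) (hdet : A.det ≠ 0)
    (hmax : IsMaxOn (fun B : Z →L[ℝ] Z => |B.det|) {B | ‖J ∘L B‖ ≤ 1} A) :
    Submodule.span ℝ {z : Z | ‖z‖ ≤ 1 ∧ ‖J (A z)‖ = 1} = ⊤ := by
  by_contra hspan
  obtain ⟨f, hf0, hf⟩ := Submodule.exists_le_ker_of_lt_top _ (lt_top_iff_ne_top.2 hspan)
  set β : Z →L[ℝ] ℝ := LinearMap.toContinuousLinearMap f
  obtain ⟨v, hv⟩ : ∃ v, β v = finrank ℝ Z + 1 := f.surjective hf0 _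
  have hβ : ∀ z, ‖z‖ ≤ 1 → ‖(J ∘L A) z‖ = 1 → β z = 0 := fun z hz hJAz =>
    hf (Submodule.subset_span ⟨hz, hJAz⟩)
  obtain ⟨δ, hnorm, hgrow⟩ :=
    ((eventually_norm_one_sub_smul_add_smul_smulRight_le_one hA hβ (J (A v))).and
      (eventually_one_lt_one_sub_pow_mul (finrank ℝ Z))).exists
  set B : Z →L[ℝ] Z := (1 - δ) • (ContinuousLinearMap.id ℝ Z + β.smulRight (δ • v))
  have hBdet : 1 < |B.det| := by
    rw [det_smul_id_add_smulRight, map_smul, hv]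
    exact hgrow.trans_le (le_abs_self _)
  have hJAB : J ∘L A ∘L B = (1 - δ) • (J ∘L A + δ • β.smulRight (J (A v))) := by
    ext z
    simp [B, smul_comm δ]
  have hle : |A.det| * |B.det| ≤ |A.det| := by
    rw [← abs_mul, ← LinearMap.det_comp]
    exact hmax (a := A ∘L B) (by rwa [mem_ofPred_eq, hJAB])
  exact hle.not_gt (lt_mul_of_one_lt_right (abs_pos.2 hdet) hBdet)

theorem isCompact_setOf_norm_comp_le {J : Z →L[ℝ] Y} (hJ : Function.Injective J) (r : ℝ) :
    IsCompact {A : Z →L[ℝ] Z | ‖J ∘L A‖ ≤ r} := by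
  have := FiniteDimensional.proper ℝ (Z →L[ℝ] Z)
  let post : (Z →L[ℝ] Z) →L[ℝ] (Z →L[ℝ] Y) := J.postcomp Z
  have hpost : Function.Injective post := fun A B hAB =>
    ContinuousLinearMap.ext fun z => hJ (DFunLike.congr_fun hAB z)
  obtain ⟨K, -, hK⟩ := post.exists_antilipschitzWith (LinearMap.ker_eq_bot.2 hpost)
  refine isCompact_of_isClosed_isBounded (isClosed_le (by fun_prop) continuous_const) ?_
  refine (hK.isBounded_preimage (isBounded_closedBall (x := 0) (r := r))).subset fun A hA => ?_
  simpa [post] using hA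

theorem exists_norm_comp_le_one_span_norm_apply_eq_one_eq_top {J : Z →L[ℝ] Y}
    (hJ : Function.Injective J) : ∃ A : Z →L[ℝ] Z, ‖J ∘L A‖ ≤ 1 ∧
      Submodule.span ℝ {z : Z | ‖z‖ ≤ 1 ∧ ‖J (A z)‖ = 1} = ⊤ := by
  obtain ⟨A, hA, hmax⟩ := (isCompact_setOf_norm_comp_le hJ 1).exists_isMaxOn ⟨0, by simp⟩
    ContinuousLinearMap.continuous_det.abs.continuousOn
  obtain ⟨c, hc, hcJ⟩ : ∃ c : ℝ, 0 < c ∧ c * ‖J‖ ≤ 1 :=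
    ⟨(‖J‖ + 1)⁻¹, by positivity, by
      rw [inv_mul_le_one₀ (by positivity)]; linarith⟩
  have hscalar : |(c • ContinuousLinearMap.id ℝ Z).det| ≤ |A.det| := by
    refine hmax (a := c • ContinuousLinearMap.id ℝ Z) ?_
    simpa [norm_smul, abs_of_pos hc] using hcJ
  have hdet : A.det ≠ 0 := by
    rw [← abs_pos]
    refine lt_of_lt_of_le ?_ hscalar
    simp [ContinuousLinearMap.det, hc.ne']
  exact ⟨A, hA, span_norm_apply_eq_one_eq_top_of_isMaxOn_abs_det hA hdet hmax⟩

end MaximalDeterminant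

theorem exists_mem_mem_dual_eq_zero_eq_one_of_span_eq_top {K V : Type*} [Field K] [AddCommGroup V]
    [Module K V] (hV : 1 < Module.rank K V) {s : Set V} (hs : Submodule.span K s = ⊤) :
    ∃ u ∈ s, ∃ v ∈ s, ∃ f : V →ₗ[K] K, f u = 0 ∧ f v = 1 := by
  let b := Basis.ofSpan hs.ge
  rw [← b.mk_eq_rank'', Cardinal.one_lt_iff_nontrivial] at hV
  obtain ⟨i, j, hij⟩ := exists_pair_ne ((linearIndepOn_empty K id).extend (empty_subset s))
  have hb : ∀ k, b k ∈ s := fun k => Basis.ofSpan_subset hs.ge (mem_range_self k)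
  exact ⟨b i, hb i, b j, hb j, b.coord j, by simp [hij], by simp⟩

theorem exists_isClosed_finrank_quotient_eq {X : Type*} [NormedAddCommGroup X] [NormedSpace ℝ X]
    {n : ℕ} (hn : n ≤ Module.rank ℝ X) : ∃ M : Submodule ℝ X, IsClosed (M : Set X) ∧
      FiniteDimensional ℝ (X ⧸ M) ∧ finrank ℝ (X ⧸ M) = n := by
  obtain ⟨g, hg⟩ := le_rank_iff_exists_linearMap.1 hn
  obtain ⟨M, hMclosed, hM⟩ :=
    (Submodule.ClosedComplemented.of_finiteDimensional (𝕜 := ℝ)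
      (LinearMap.range g)).exists_isClosed_isCompl
  let e := Submodule.quotientEquivOfIsCompl M (LinearMap.range g) hM.symm
  refine ⟨M, hMclosed, e.symm.finiteDimensional, ?_⟩
  rw [e.finrank_eq, LinearMap.finrank_range_of_inj hg, finrank_fin_fun]

theorem exists_injective_continuousLinearMap {Z Y : Type*} [NormedAddCommGroup Z]
    [NormedSpace ℝ Z] [FiniteDimensional ℝ Z] [NormedAddCommGroup Y] [NormedSpace ℝ Y]
    (h : finrank ℝ Z ≤ Module.rank ℝ Y) : ∃ J : Z →L[ℝ] Y, Function.Injective J := by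
  obtain ⟨g, hg⟩ := le_rank_iff_exists_linearMap.1 h
  exact ⟨LinearMap.toContinuousLinearMap (g ∘ₗ (finBasis ℝ Z).equivFun.toLinearMap),
    hg.comp (LinearEquiv.injective _)⟩

theorem exists_norm_lt_mkQL_eq {X : Type*} [NormedAddCommGroup X] [NormedSpace ℝ X]
    {M : Submodule ℝ X} {z : X ⧸ M} (hz : ‖z‖ ≤ 1) {r : ℝ} (hr : 1 < r) :
    ∃ x, ‖x‖ < r ∧ M.mkQL x = z := by
  obtain ⟨x, hxz, hx⟩ := Submodule.Quotient.norm_mk_lt z (sub_pos.2 hr)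
  exact ⟨x, by linarith, hxz⟩

theorem exists_norm_almost_attained_on_ker_and_off_ker {X Y : Type*}
    [NormedAddCommGroup X] [NormedSpace ℝ X] [NormedAddCommGroup Y] [NormedSpace ℝ Y]
    (hX : 2 ≤ Module.rank ℝ X) (hY : 2 ≤ Module.rank ℝ Y) :
    ∃ (S : X →L[ℝ] Y) (f : X →L[ℝ] ℝ) (y : Y), ‖S‖ ≤ 1 ∧ ‖y‖ = 1 ∧
      (∀ r > 1, ∃ x, ‖x‖ < r ∧ ‖S x‖ = 1 ∧ f x = 0) ∧
      ∀ r > 1, ∃ x, ‖x‖ < r ∧ S x = y ∧ f x = 1 := by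
  obtain ⟨M, _, _, hM⟩ := exists_isClosed_finrank_quotient_eq (n := 2) (mod_cast hX)
  obtain ⟨J, hJ⟩ := exists_injective_continuousLinearMap (Z := X ⧸ M) (Y := Y) (by simpa [hM])
  obtain ⟨A, hA, hspan⟩ := exists_norm_comp_le_one_span_norm_apply_eq_one_eq_top hJ
  obtain ⟨u, ⟨hu, hSu⟩, v, ⟨hv, hSv⟩, f, hfu, hfv⟩ :=
    exists_mem_mem_dual_eq_zero_eq_one_of_span_eq_top
      (by rw [← finrank_eq_rank, hM]; norm_num) hspan
  refine ⟨J ∘L A ∘L M.mkQL, LinearMap.toContinuousLinearMap f ∘L M.mkQL, J (A v), ?_, hSv,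
    fun r hr => ?_, fun r hr => ?_⟩
  · refine ContinuousLinearMap.opNorm_le_bound _ zero_le_one fun x => ?_
    exact (J ∘L A).le_of_opNorm_le_of_le hA (Submodule.Quotient.norm_mk_le M x)
  · obtain ⟨x, hx, rfl⟩ := exists_norm_lt_mkQL_eq hu hr
    exact ⟨x, hx, hSu, hfu⟩
  · obtain ⟨x, hx, rfl⟩ := exists_norm_lt_mkQL_eq hv hr
    exact ⟨x, hx, rfl, hfv⟩

theorem fails_propertyP2_general
    {X Y : Type*} [NormedAddCommGroup X] [NormedSpace ℝ X]
    [NormedAddCommGroup Y] [NormedSpace ℝ Y]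
    (hX : 2 ≤ Module.rank ℝ X) (hY : 2 ≤ Module.rank ℝ Y) :
    ∃ ε > (0 : ℝ), ∀ η > (0 : ℝ), ∃ (T : X →L[ℝ] Y) (x₀ : X),
      ‖T‖ = 1 ∧ ‖x₀‖ = 1 ∧ ‖T x₀‖ > 1 - η ∧
      ∀ x₁ : X, ‖x₁‖ = 1 → ‖T x₁‖ = 1 → ¬(‖x₁ - x₀‖ < ε) := by
  obtain ⟨S, f, y, hS, hy, hker, hSf⟩ := exists_norm_almost_attained_on_ker_and_off_ker hX hY
  have hf : 0 < ‖f‖ := by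
    obtain ⟨x, -, -, hfx⟩ := hSf 2 one_lt_two
    exact norm_pos_iff.2 fun h => by simp [h] at hfx
  refine ⟨‖f‖⁻¹, inv_pos.2 hf, fun η hη => ?_⟩
  obtain ⟨T, x₀, hT, hx₀, hTx₀, hfx₀, hfar⟩ :=
    exists_norm_eq_one_forall_norm_apply_eq_one_imp_one_le_abs hS hy hker hSf (sub_lt_self 1 hη)
  refine ⟨T, x₀, hT, hx₀, hTx₀, fun x₁ hx₁ hTx₁ => ?_⟩
  rw [not_lt, inv_le_iff_one_le_mul₀' hf]
  calc 1 ≤ |f x₁| := hfar x₁ hx₁ hTx₁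
    _ = ‖f (x₁ - x₀)‖ := by rw [map_sub, hfx₀, sub_zero, Real.norm_eq_abs]
    _ ≤ ‖f‖ * ‖x₁ - x₀‖ := f.le_opNorm _

/-- If `X` and `Y` are real Banach spaces of dimension at least 2, then the pair
`(X, Y)` fails property (P2): there is `ε > 0` such that for every `η > 0` one can
find a norm-one operator `T : X → Y` and `x₀ ∈ S_X` with `‖T x₀‖ > 1 - η`, but no
`x₁ ∈ S_X` satisfies both `‖T x₁‖ = 1` and `‖x₁ - x₀‖ < ε`. -/
theorem fails_propertyP2
    {X Y : Type*} [NormedAddCommGroup X] [NormedSpace ℝ X] [CompleteSpace X]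
    [NormedAddCommGroup Y] [NormedSpace ℝ Y] [CompleteSpace Y]
    (hX : 2 ≤ Module.rank ℝ X) (hY : 2 ≤ Module.rank ℝ Y) :
    ∃ ε > (0 : ℝ), ∀ η > (0 : ℝ), ∃ (T : X →L[ℝ] Y) (x₀ : X),
      ‖T‖ = 1 ∧ ‖x₀‖ = 1 ∧ ‖T x₀‖ > 1 - η ∧
      ∀ x₁ : X, ‖x₁‖ = 1 → ‖T x₁‖ = 1 → ¬(‖x₁ - x₀‖ < ε) :=
  fails_propertyP2_general hX hY
end

section
/- Let X be a 2-dimensional real normed space identified with ℝ² via a basis e₁, e₂, and let γ̃(θ) = (cos θ · e₁ + sin θ · e₂)/‖cos θ · e₁ + sin θ · e₂‖ for θ ∈ ℝ. Let x* ∈ X* be a continuous linear functional and let θ₁ ≤ θ₂ with θ₂ − θ₁ ≤ π. If x*(γ̃(θ₁)) ≥ 1 and x*(γ̃(θ₂)) ≥ 1, then x*(γ̃(θ)) ≥ 1 for every θ ∈ [θ₁, θ₂]. In particular, if x* ∈ S_{X*} and γ̃(θ₁), γ̃(θ₂) belong to the face F(x*), then γ̃(θ) ∈ F(x*) for all θ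 ∈ [θ₁, θ₂]. -/
/-!
For `v ≠ 0`, the condition `1 ≤ f (‖v‖⁻¹ • v)` means `‖v‖ ≤ f v`. By the triangle inequality this
cuts out a convex cone without the origin. Such a cone contains the arc of angles `[θ₁, θ₂]` as soon
as it contains the end points: for `θ` strictly in between, `sin (θ₂ - θ₁)` times the point at angle
`θ` is a positive combination of the end points, so it lies in the cone, and since the cone misses
the origin, `sin (θ₂ - θ₁)` cannot vanish even when the end points are antipodal.
-/

open NormedSpace (normalize)

section CosSinCurve

variable {M : Type*} [AddCommGroup M] [Module ℝ M]

/-- The curve `θ ↦ cos θ • e₁ + sin θ • e₂`, an ellipse centred at the origin when `e₁` and `e₂` are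
linearly independent; its normalization is the curve `γ̃` parametrizing the unit sphere. -/
noncomputable def cosSinCurve (e₁ e₂ : M) (θ : ℝ) : M :=
  Real.cos θ • e₁ + Real.sin θ • e₂

lemma sin_sub_smul_cosSinCurve (e₁ e₂ : M) (θ₁ θ θ₂ : ℝ) :
    Real.sin (θ₂ - θ₁) • cosSinCurve e₁ e₂ θ =
      Real.sin (θ₂ - θ) • cosSinCurve e₁ e₂ θ₁ + Real.sin (θ - θ₁) • cosSinCurve e₁ e₂ θ₂ := by
  simp only [cosSinCurve, Real.sin_sub]
  module

lemma cosSinCurve_mem_of_blunt {C : ConvexCone ℝ M} (hC : C.Blunt) {e₁ e₂ : M} {θ₁ θ θ₂ : ℝ}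
    (hπ : θ₂ - θ₁ ≤ Real.pi) (h₁ : cosSinCurve e₁ e₂ θ₁ ∈ C) (h₂ : cosSinCurve e₁ e₂ θ₂ ∈ C)
    (hθ : θ ∈ Set.Icc θ₁ θ₂) : cosSinCurve e₁ e₂ θ ∈ C := by
  rcases hθ.1.eq_or_lt with rfl | hθ₁
  · exact h₁
  rcases hθ.2.eq_or_lt with rfl | hθ₂
  · exact h₂
  have hsmul : Real.sin (θ₂ - θ₁) • cosSinCurve e₁ e₂ θ ∈ C := by
    rw [sin_sub_smul_cosSinCurve]
    exact C.add_mem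
      (C.smul_mem (Real.sin_pos_of_pos_of_lt_pi (by linarith) (by linarith)) h₁)
      (C.smul_mem (Real.sin_pos_of_pos_of_lt_pi (by linarith) (by linarith)) h₂)
  have hsin_ne : Real.sin (θ₂ - θ₁) ≠ 0 := fun h ↦ hC (by rwa [h, zero_smul] at hsmul)
  have hsin_nonneg : 0 ≤ Real.sin (θ₂ - θ₁) :=
    Real.sin_nonneg_of_nonneg_of_le_pi (by linarith) hπ
  exact (C.smul_mem_iff (hsin_nonneg.lt_of_ne' hsin_ne)).1 hsmul

end CosSinCurve

/-- The Bishop–Phelps cone `{v | ‖v‖ ≤ f v}` of a linear functional `f`, without the origin. The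
origin is removed by requiring `0 < f v`; in a normed space this removes nothing else. -/
def bluntBishopPhelpsCone {X : Type*} [SeminormedAddCommGroup X] [NormedSpace ℝ X]
    (f : X →ₗ[ℝ] ℝ) : ConvexCone ℝ X where
  carrier := {v | 0 < f v ∧ ‖v‖ ≤ f v}
  smul_mem' c hc v hv := by
    simp only [Set.mem_ofPred_eq, map_smul, smul_eq_mul, norm_smul, Real.norm_of_nonneg hc.le]
    exact ⟨mul_pos hc hv.1, mul_le_mul_of_nonneg_left hv.2 hc.le⟩
  add_mem' v hv w hw := by
    simp only [Set.mem_ofPred_eq, map_add]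
    exact ⟨add_pos hv.1 hw.1, norm_add_le_of_le hv.2 hw.2⟩

lemma blunt_bluntBishopPhelpsCone {X : Type*} [SeminormedAddCommGroup X] [NormedSpace ℝ X]
    (f : X →ₗ[ℝ] ℝ) : (bluntBishopPhelpsCone f).Blunt :=
  fun h ↦ h.1.ne' (map_zero f)

section Normalize

variable {X : Type*} [NormedAddCommGroup X] [NormedSpace ℝ X] {f : X →ₗ[ℝ] ℝ} {v : X}

lemma ne_zero_of_one_le_apply_normalize (h : 1 ≤ f (normalize v)) : v ≠ 0 := by
  rintro rfl
  rw [NormedSpace.normalize_zero_eq_zero, map_zero] at h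
  exact zero_lt_one.not_ge h

lemma mem_bluntBishopPhelpsCone_iff_one_le_apply_normalize :
    v ∈ bluntBishopPhelpsCone f ↔ 1 ≤ f (normalize v) := by
  have one_le_iff (hv : v ≠ 0) : 1 ≤ f (normalize v) ↔ ‖v‖ ≤ f v := by
    rw [NormedSpace.normalize, map_smul, smul_eq_mul, le_inv_mul_iff₀ (norm_pos_iff.2 hv), mul_one]
  constructor
  · rintro ⟨hpos, hle⟩
    have hv : v ≠ 0 := by
      rintro rfl
      exact hpos.ne' (map_zero f)
    exact (one_le_iff hv).2 hle
  · intro h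
    have hv := ne_zero_of_one_le_apply_normalize h
    have hle := (one_le_iff hv).1 h
    exact ⟨(norm_pos_iff.2 hv).trans_le hle, hle⟩

end Normalize

theorem face_arc_lemma_general
    {X : Type*} [NormedAddCommGroup X] [NormedSpace ℝ X] (e₁ e₂ : X) (γ : ℝ → X)
    (hγ : ∀ θ : ℝ, γ θ =
      ‖Real.cos θ • e₁ + Real.sin θ • e₂‖⁻¹ • (Real.cos θ • e₁ + Real.sin θ • e₂))
    (f : X →ₗ[ℝ] ℝ) (θ₁ θ₂ : ℝ) (hπ : θ₂ - θ₁ ≤ Real.pi)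
    (h₁ : 1 ≤ f (γ θ₁)) (h₂ : 1 ≤ f (γ θ₂)) :
    (∀ θ ∈ Set.Icc θ₁ θ₂, 1 ≤ f (γ θ)) ∧
    ((∀ v, f v ≤ ‖v‖) → ∀ θ ∈ Set.Icc θ₁ θ₂, ‖γ θ‖ = 1 ∧ f (γ θ) = 1) := by
  have γ_eq (θ : ℝ) : γ θ = normalize (cosSinCurve e₁ e₂ θ) := hγ θ
  have mem_cone_iff (θ : ℝ) :
      cosSinCurve e₁ e₂ θ ∈ bluntBishopPhelpsCone f ↔ 1 ≤ f (γ θ) := by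
    rw [γ_eq, mem_bluntBishopPhelpsCone_iff_one_le_apply_normalize]
  have arc : ∀ θ ∈ Set.Icc θ₁ θ₂, 1 ≤ f (γ θ) := fun θ hθ ↦
    (mem_cone_iff θ).1 <| cosSinCurve_mem_of_blunt (blunt_bluntBishopPhelpsCone f) hπ
      ((mem_cone_iff θ₁).2 h₁) ((mem_cone_iff θ₂).2 h₂) hθ
  refine ⟨arc, fun hf θ hθ ↦ ?_⟩
  have norm_γ : ‖γ θ‖ = 1 := by
    rw [γ_eq]
    exact NormedSpace.norm_normalize (ne_zero_of_one_le_apply_normalize (γ_eq θ ▸ arc θ hθ))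
  exact ⟨norm_γ, ((hf (γ θ)).trans_eq norm_γ).antisymm (arc θ hθ)⟩

/-- Let `X` be a 2-dimensional real normed space with basis `e₁, e₂`, and let
`γ θ = (cos θ • e₁ + sin θ • e₂) / ‖cos θ • e₁ + sin θ • e₂‖` parametrize `S_X`.
If a continuous linear functional `x'` satisfies `x'(γ θ₁) ≥ 1` and `x'(γ θ₂) ≥ 1`
with `θ₁ ≤ θ₂ ≤ θ₁ + π`, then `x'(γ θ) ≥ 1` for all `θ ∈ [θ₁, θ₂]`. In particular,
if `x' ∈ S_{X*}` and `γ θ₁, γ θ₂` lie in the face `F(x')`, then `γ θ ∈ F(x')` for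
all `θ ∈ [θ₁, θ₂]`. -/
theorem face_arc_lemma
    {X : Type*} [NormedAddCommGroup X] [NormedSpace ℝ X]
    (hX : Module.finrank ℝ X = 2)
    (e₁ e₂ : X) (hbasis : LinearIndependent ℝ ![e₁, e₂])
    (γ : ℝ → X)
    (hγ : ∀ θ : ℝ, γ θ =
      ‖Real.cos θ • e₁ + Real.sin θ • e₂‖⁻¹ • (Real.cos θ • e₁ + Real.sin θ • e₂))
    (x' : X →L[ℝ] ℝ) (θ₁ θ₂ : ℝ) (h12 : θ₁ ≤ θ₂) (hπ : θ₂ - θ₁ ≤ Real.pi)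
    (h1 : 1 ≤ x' (γ θ₁)) (h2 : 1 ≤ x' (γ θ₂)) :
    (∀ θ ∈ Set.Icc θ₁ θ₂, 1 ≤ x' (γ θ)) ∧
    (‖x'‖ = 1 → x' (γ θ₁) = 1 → x' (γ θ₂) = 1 →
      ∀ θ ∈ Set.Icc θ₁ θ₂, ‖γ θ‖ = 1 ∧ x' (γ θ) = 1) := by
  have ⟨arc, face⟩ := face_arc_lemma_general e₁ e₂ γ hγ (x' : X →ₗ[ℝ] ℝ) θ₁ θ₂ hπ h1 h2
  exact ⟨arc, fun hx _ _ ↦ face fun v ↦ (le_abs_self _).trans (by simpa [hx] using x'.le_opNorm v)⟩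
end

section
/- Let X and Y be 2-dimensional real normed spaces, identify X with ℝ² via a basis e₁, e₂, and set γ̃(θ) = (cos θ · e₁ + sin θ · e₂)/‖cos θ · e₁ + sin θ · e₂‖. Let T : X → Y be a bounded linear operator with ‖T‖ = 1, let x = γ̃(θ₀) ∈ S_X, and let γ(θ) = γ̃(θ + θ₀) for θ ∈ [0, π] be the half arc starting at x. Suppose there is θ_c ∈ (0, π) such that ‖T(γ(0))‖ = ‖T(γ(θ_c))‖ = ‖T(γ(π))‖ = 1, and suppose there exist θ₁ ∈ [0, θ_c] and θ₂ ∈ [θ_c, π] such that ‖T(γ(θ₁))‖ < 1 and ‖T(γ(θ₂))‖ < 1. Then for every y* ∈ S_{Y*} with y*(T(x)) = 1, the point T(γ(θ_c)) does not belong to F(y*) ∪ F(−y*). -/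
/-!
For every linear functional `f`, the vectors `z` with `‖z‖ ≤ f z` form a convex cone, so a
functional that is at least `1` at both ends of an arc of the unit sphere shorter than a half turn
is at least `1` on the whole arc. Put `f = y' ∘ T`, so that `|f z| ≤ ‖T z‖`. If `f (γ θc) ≥ 1`, this
applies to `f` on the arc from `γ 0` to `γ θc` and contradicts `‖T (γ θ₁)‖ < 1`; if
`f (γ θc) ≤ -1`, it applies to `-f` on the arc from `γ θc` to `γ π = -γ 0` and contradicts
`‖T (γ θ₂)‖ < 1`.
-/

open Real

section PolarVector

variable {V : Type*} [AddCommGroup V] [Module ℝ V]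

/-- The vector at angle `θ` in the coordinates given by `e₁` and `e₂`; the curve `γ̃` is its
normalization. -/
noncomputable def polarVector (e₁ e₂ : V) (θ : ℝ) : V :=
  cos θ • e₁ + sin θ • e₂

theorem polarVector_add_pi (e₁ e₂ : V) (θ : ℝ) :
    polarVector e₁ e₂ (θ + π) = -polarVector e₁ e₂ θ := by
  simp only [polarVector, cos_add_pi, sin_add_pi, neg_smul, neg_add]

theorem polarVector_ne_zero {e₁ e₂ : V} (he : LinearIndependent ℝ ![e₁, e₂]) (θ : ℝ) :
    polarVector e₁ e₂ θ ≠ 0 := by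
  intro h
  obtain ⟨hcos, hsin⟩ := LinearIndependent.pair_iff.1 he _ _ h
  simpa [hcos, hsin] using sin_sq_add_cos_sq θ

theorem sin_sub_smul_polarVector (e₁ e₂ : V) (α β θ : ℝ) :
    sin (β - α) • polarVector e₁ e₂ θ =
      sin (β - θ) • polarVector e₁ e₂ α + sin (θ - α) • polarVector e₁ e₂ β := by
  simp only [polarVector, sin_sub]
  module

theorem polarVector_mem_of_mem_Icc {C : PointedCone ℝ V} {e₁ e₂ : V} {α β θ : ℝ}
    (hαβ : β - α ∈ Set.Ioo 0 π) (hθ : θ ∈ Set.Icc α β)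
    (hα : polarVector e₁ e₂ α ∈ C) (hβ : polarVector e₁ e₂ β ∈ C) :
    polarVector e₁ e₂ θ ∈ C := by
  have hβθ : 0 ≤ sin (β - θ) :=
    sin_nonneg_of_nonneg_of_le_pi (by linarith [hθ.2]) (by linarith [hθ.1, hαβ.2])
  have hθα : 0 ≤ sin (θ - α) :=
    sin_nonneg_of_nonneg_of_le_pi (by linarith [hθ.1]) (by linarith [hθ.2, hαβ.2])
  rw [← C.smul_mem_iff (sin_pos_of_mem_Ioo hαβ), sin_sub_smul_polarVector]
  exact C.add_mem (C.smul_mem hβθ hα) (C.smul_mem hθα hβ)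

end PolarVector

section BishopPhelpsCone

variable {E : Type*} [SeminormedAddCommGroup E] [NormedSpace ℝ E]

/-- The Bishop–Phelps cone of a linear functional `f`. If `‖f‖ = 1`, its unit vectors form
the face `F(f)`. -/
def bishopPhelpsCone (f : E →ₗ[ℝ] ℝ) : PointedCone ℝ E where
  carrier := {x | ‖x‖ ≤ f x}
  zero_mem' := by simp
  add_mem' hx hy := by
    simpa using norm_add_le_of_le hx hy
  smul_mem' := fun ⟨c, hc⟩ _ hx => by
    simpa [Nonneg.mk_smul, norm_smul, abs_of_nonneg hc] using mul_le_mul_of_nonneg_left hx hc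

theorem mem_bishopPhelpsCone {f : E →ₗ[ℝ] ℝ} {x : E} : x ∈ bishopPhelpsCone f ↔ ‖x‖ ≤ f x :=
  Iff.rfl

end BishopPhelpsCone

section UnitCurve

variable {X : Type*} [NormedAddCommGroup X] [NormedSpace ℝ X] {e₁ e₂ : X}

/-- The curve `γ̃`, which parametrizes the unit sphere of the plane spanned by linearly independent
`e₁` and `e₂`. -/
noncomputable def unitCurve (e₁ e₂ : X) (θ : ℝ) : X :=
  NormedSpace.normalize (polarVector e₁ e₂ θ)

theorem unitCurve_add_pi (e₁ e₂ : X) (θ : ℝ) :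
    unitCurve e₁ e₂ (θ + π) = -unitCurve e₁ e₂ θ := by
  rw [unitCurve, polarVector_add_pi, NormedSpace.normalize_neg, unitCurve]

theorem one_le_apply_unitCurve_iff (he : LinearIndependent ℝ ![e₁, e₂]) {f : X →ₗ[ℝ] ℝ} {θ : ℝ} :
    1 ≤ f (unitCurve e₁ e₂ θ) ↔ polarVector e₁ e₂ θ ∈ bishopPhelpsCone f := by
  have hpos : 0 < ‖polarVector e₁ e₂ θ‖ := norm_pos_iff.2 (polarVector_ne_zero he θ)
  rw [mem_bishopPhelpsCone, unitCurve, NormedSpace.normalize, map_smul, smul_eq_mul,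
    le_inv_mul_iff₀ hpos, mul_one]

theorem one_le_apply_unitCurve_of_mem_Icc (he : LinearIndependent ℝ ![e₁, e₂]) {f : X →ₗ[ℝ] ℝ}
    {α β θ : ℝ} (hαβ : β - α ∈ Set.Ioo 0 π) (hθ : θ ∈ Set.Icc α β)
    (hα : 1 ≤ f (unitCurve e₁ e₂ α)) (hβ : 1 ≤ f (unitCurve e₁ e₂ β)) :
    1 ≤ f (unitCurve e₁ e₂ θ) := by
  rw [one_le_apply_unitCurve_iff he] at hα hβ ⊢
  exact polarVector_mem_of_mem_Icc hαβ hθ hα hβ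

end UnitCurve

theorem image_not_in_faces_general
    {X Y : Type*} [NormedAddCommGroup X] [NormedSpace ℝ X]
    [SeminormedAddCommGroup Y] [NormedSpace ℝ Y]
    {e₁ e₂ : X} (he : LinearIndependent ℝ ![e₁, e₂])
    {θ₀ : ℝ} {γ : ℝ → X} (hγ : ∀ θ, γ θ = unitCurve e₁ e₂ (θ + θ₀))
    {T : X →ₗ[ℝ] Y} {θc θ₁ θ₂ : ℝ} (hθc : θc ∈ Set.Ioo 0 π)
    (hθ₁ : θ₁ ∈ Set.Icc 0 θc) (h1 : ‖T (γ θ₁)‖ < 1)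
    (hθ₂ : θ₂ ∈ Set.Icc θc π) (h2 : ‖T (γ θ₂)‖ < 1)
    {y' : Y →L[ℝ] ℝ} (hy' : ‖y'‖ ≤ 1) (h0 : 1 ≤ y' (T (γ 0))) :
    |y' (T (γ θc))| < 1 := by
  let f : X →ₗ[ℝ] ℝ := y'.toLinearMap ∘ₗ T
  have abs_f_le (x : X) : |f x| ≤ ‖T x‖ := by
    simpa [f] using y'.le_of_opNorm_le hy' (T x)
  have hγπ : γ π = -γ 0 := by
    rw [hγ, hγ, zero_add, add_comm, unitCurve_add_pi]
  have one_le_of_mem_Icc {g : X →ₗ[ℝ] ℝ} {α β θ : ℝ} (hαβ : β - α ∈ Set.Ioo 0 π)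
      (hθ : θ ∈ Set.Icc α β) (hα : 1 ≤ g (γ α)) (hβ : 1 ≤ g (γ β)) : 1 ≤ g (γ θ) := by
    rw [hγ] at hα hβ ⊢
    exact one_le_apply_unitCurve_of_mem_Icc he (by simpa using hαβ) (by simpa using hθ) hα hβ
  rw [abs_lt]
  constructor
  · by_contra! hc
    have hπ : 1 ≤ (-f) (γ π) := by simpa [hγπ, f] using h0
    have hθ₂f : 1 ≤ (-f) (γ θ₂) :=
      one_le_of_mem_Icc ⟨by linarith [hθc.2], by linarith [hθc.1]⟩ hθ₂ (le_neg_of_le_neg hc) hπ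
    exact h2.not_ge (hθ₂f.trans ((neg_le_abs _).trans (abs_f_le _)))
  · by_contra! hc
    have hθ₁f : 1 ≤ f (γ θ₁) := one_le_of_mem_Icc (by simpa using hθc) hθ₁ h0 hc
    exact h1.not_ge (hθ₁f.trans ((le_abs_self _).trans (abs_f_le _)))

/-- Let `X, Y` be 2-dimensional real normed spaces, `γ` the half arc starting at
`x = γ̃ θ₀ ∈ S_X`, and `T : X → Y` a norm-one operator such that
`‖T (γ 0)‖ = ‖T (γ θc)‖ = ‖T (γ π)‖ = 1` for some `θc ∈ (0, π)`, while
`‖T (γ θ₁)‖ < 1` and `‖T (γ θ₂)‖ < 1` for some `θ₁ ∈ [0, θc]`, `θ₂ ∈ [θc, π]`.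
Then `T (γ θc) ∉ F(y') ∪ F(-y')` for any `y' ∈ S_{Y*}` with `y'(T x) = 1`. -/
theorem image_not_in_faces
    {X Y : Type*} [NormedAddCommGroup X] [NormedSpace ℝ X]
    [NormedAddCommGroup Y] [NormedSpace ℝ Y]
    (hX : Module.finrank ℝ X = 2) (hY : Module.finrank ℝ Y = 2)
    (e₁ e₂ : X) (hbasis : LinearIndependent ℝ ![e₁, e₂])
    (θ₀ : ℝ) (γ : ℝ → X)
    (hγ : ∀ θ : ℝ, γ θ =
      ‖Real.cos (θ + θ₀) • e₁ + Real.sin (θ + θ₀) • e₂‖⁻¹ •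
        (Real.cos (θ + θ₀) • e₁ + Real.sin (θ + θ₀) • e₂))
    (T : X →L[ℝ] Y) (hT : ‖T‖ = 1)
    (θc : ℝ) (hθc : θc ∈ Set.Ioo 0 Real.pi)
    (h0 : ‖T (γ 0)‖ = 1) (hc : ‖T (γ θc)‖ = 1) (hπ : ‖T (γ Real.pi)‖ = 1)
    (θ₁ : ℝ) (hθ₁ : θ₁ ∈ Set.Icc 0 θc) (h1 : ‖T (γ θ₁)‖ < 1)
    (θ₂ : ℝ) (hθ₂ : θ₂ ∈ Set.Icc θc Real.pi) (h2 : ‖T (γ θ₂)‖ < 1) :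
    ∀ y' : Y →L[ℝ] ℝ, ‖y'‖ = 1 → y' (T (γ 0)) = 1 →
      T (γ θc) ∉
        ({y : Y | ‖y‖ = 1 ∧ y' y = 1} ∪ {y : Y | ‖y‖ = 1 ∧ y' y = -1}) := by
  rintro y' hy' hx (⟨_, h⟩ | ⟨_, h⟩) <;>
    simpa [h] using image_not_in_faces_general (T := T.toLinearMap) hbasis hγ hθc hθ₁ h1 hθ₂ h2
      hy'.le hx.ge
end

section
/- Let X and Y be 2-dimensional real normed spaces. Then there exists a bounded linear operator T : X → Y with ‖T‖ = 1 such that (i) T(B_X) ⊆ B_Y, and (ii) there are two points y₁, y₂ ∈ T(B_X) ∩ S_Y and a functional y₁* ∈ S_{Y*} with y₁*(y₁) = 1 such that dist(y₂, F(y₁*) ∪ F(−y₁*)) > 0. -/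
/-!
Among the operators `T : X → Y` with `‖T‖ ≤ 1`, choose one of maximal volume. Perturbing `T` to
`(1 + tD) ∘ T` with `tr D > 0` increases the volume to first order, so it must violate the norm
constraint; hence some contact pair `(x, f)`, that is `‖x‖, ‖f‖ ≤ 1` and `f (T x) = 1`, satisfies
`f (D (T x)) ≥ 0`. Taking `D = 1` produces a first contact pair `(x, f)`.

If the theorem failed for `T`, all contact pairs `(x, f)` and `(z, g)` would satisfy
`f (T z) = ±1`. Evaluating at midpoints shows that the signs are coherent: `f (T z) * g (T x) = 1`.
Then `D = 2 - 3 f ⊗ T x` takes the value `2 - 3 = -1` on every contact pair, although its trace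
`2 dim Y - 3` is positive in dimension at least two.
-/

open Filter Module Set Topology

section Determinant

theorem hasDerivAt_det_one_add_smul {𝕜 V : Type*} [NontriviallyNormedField 𝕜]
    [AddCommGroup V] [Module 𝕜 V] [FiniteDimensional 𝕜 V] (A : V →ₗ[𝕜] V) :
    HasDerivAt (fun t : 𝕜 ↦ LinearMap.det (1 + t • A)) (LinearMap.trace 𝕜 V A) 0 := by
  classical
  let b := finBasis 𝕜 V
  let P := (1 + (Polynomial.X : Polynomial 𝕜) • (LinearMap.toMatrix b b A).map Polynomial.C).det
  have det_eq_eval (t : 𝕜) : LinearMap.det (1 + t • A) = P.eval t := by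
    rw [← LinearMap.det_toMatrix b, eval_det]
    simp [← Matrix.smul_eq_mul_diagonal]
  simp_rw [det_eq_eval, LinearMap.trace_eq_matrix_trace 𝕜 b, ← Matrix.derivative_det_one_add_X_smul]
  exact P.hasDerivAt 0

theorem eventually_one_lt_det_one_add_smul {V : Type*} [AddCommGroup V] [Module ℝ V]
    [FiniteDimensional ℝ V] {A : V →ₗ[ℝ] V} (hA : 0 < LinearMap.trace ℝ V A) :
    ∀ᶠ t : ℝ in 𝓝[>] 0, 1 < LinearMap.det (1 + t • A) := by
  let d (t : ℝ) : ℝ := LinearMap.det (1 + t • A)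
  have tendsto_slope : Tendsto (slope d 0) (𝓝[>] 0) (𝓝 (LinearMap.trace ℝ V A)) :=
    (hasDerivAt_iff_tendsto_slope.mp (hasDerivAt_det_one_add_smul A)).mono_left
      (nhdsWithin_mono 0 fun t (ht : 0 < t) ↦ ht.ne')
  filter_upwards [tendsto_slope.eventually_const_lt hA, self_mem_nhdsWithin]
    with t hslope (ht : 0 < t)
  simpa [d] using (slope_pos_iff_of_le ht.le).mp hslope

end Determinant

section Perturbation

theorem eventually_forall_add_mul_lt {α : Type*} [TopologicalSpace α] {K : Set α}
    (hK : IsCompact K) {a b : α → ℝ} (ha : ContinuousOn a K) (hb : ContinuousOn b K) {c : ℝ}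
    (hac : ∀ k ∈ K, a k ≤ c) (hneg : ∀ k ∈ K, a k = c → b k < 0) :
    ∀ᶠ t : ℝ in 𝓝[>] 0, ∀ k ∈ K, a k + t * b k < c := by
  suffices ∀ᶠ t : ℝ in 𝓝 0, ∀ k ∈ K, t ∈ Ioi 0 ∧ k ∈ K → a k + t * b k < c by
    filter_upwards [nhdsWithin_le_nhds this, self_mem_nhdsWithin] with t h ht k hk
    exact h k hk ⟨ht, hk⟩
  refine hK.eventually_forall_of_forall_eventually fun k hk ↦ ?_
  have eventually_lt : ∀ᶠ z : ℝ × α in 𝓝[Ioi 0 ×ˢ K] (0, k), a z.2 + z.1 * b z.2 < c := by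
    rw [nhdsWithin_prod_eq]
    have tendsto_a := (ha k hk).tendsto.comp (tendsto_snd (f := 𝓝[>] (0 : ℝ)))
    have tendsto_b := (hb k hk).tendsto.comp (tendsto_snd (f := 𝓝[>] (0 : ℝ)))
    rcases (hac k hk).lt_or_eq with hlt | heq
    · have tendsto_time : Tendsto Prod.fst (𝓝[>] (0 : ℝ) ×ˢ 𝓝[K] k) (𝓝 0) :=
        tendsto_fst.mono_right nhdsWithin_le_nhds
      exact (tendsto_a.add (tendsto_time.mul tendsto_b)).eventually_lt_const (by simpa using hlt)
    · filter_upwards [tendsto_b.eventually_lt_const (hneg k hk heq),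
        prod_mem_prod self_mem_nhdsWithin self_mem_nhdsWithin] with z hbz ⟨hpos, hzK⟩
      exact add_lt_of_le_of_neg (hac z.2 hzK) (mul_neg_of_pos_of_neg hpos hbz)
  exact eventually_nhdsWithin_iff.mp eventually_lt

end Perturbation

section Contact

variable {X Y : Type*} [NormedAddCommGroup X] [NormedSpace ℝ X]
  [NormedAddCommGroup Y] [NormedSpace ℝ Y]

/-- A pair `(x, f)` in `B_X × B_{Y*}` with `f (T x) = 1`. When `‖T‖ ≤ 1`, this says that `T x` is a
contact point of `T(B_X)` with `S_Y` and that `f` is a norm-one functional supporting `B_Y` there;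
the norms are only bounded in the definition so that the pairs range over a product of balls. -/
structure IsContactPair (T : X →L[ℝ] Y) (x : X) (f : Y →L[ℝ] ℝ) : Prop where
  norm_point_le : ‖x‖ ≤ 1
  norm_functional_le : ‖f‖ ≤ 1
  apply_eq_one : f (T x) = 1

namespace IsContactPair

variable {T : X →L[ℝ] Y} {x z : X} {f g : Y →L[ℝ] ℝ}

theorem one_le_norm_mul_norm (h : IsContactPair T x f) : 1 ≤ ‖f‖ * ‖T x‖ :=
  calc
    1 = ‖f (T x)‖ := by simp [h.apply_eq_one]
    _ ≤ ‖f‖ * ‖T x‖ := f.le_opNorm (T x)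

theorem one_le_norm_apply (h : IsContactPair T x f) : 1 ≤ ‖T x‖ :=
  h.one_le_norm_mul_norm.trans (mul_le_of_le_one_left (norm_nonneg _) h.norm_functional_le)

theorem one_le_opNorm (h : IsContactPair T x f) : 1 ≤ ‖T‖ :=
  h.one_le_norm_apply.trans (T.unit_le_opNorm x h.norm_point_le)

theorem norm_apply_eq_one (h : IsContactPair T x f) (hT : ‖T‖ ≤ 1) : ‖T x‖ = 1 :=
  ((T.unit_le_opNorm x h.norm_point_le).trans hT).antisymm h.one_le_norm_apply

theorem norm_functional_eq_one (h : IsContactPair T x f) (hT : ‖T‖ ≤ 1) : ‖f‖ = 1 :=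
  h.norm_functional_le.antisymm (by simpa [h.norm_apply_eq_one hT] using h.one_le_norm_mul_norm)

theorem apply_mem (h : IsContactPair T x f) (hT : ‖T‖ ≤ 1) :
    T x ∈ T '' Metric.closedBall 0 1 ∩ Metric.sphere 0 1 :=
  ⟨mem_image_of_mem T (by simpa using h.norm_point_le), by simpa using h.norm_apply_eq_one hT⟩

theorem neg (h : IsContactPair T x f) : IsContactPair T (-x) (-f) :=
  ⟨by simpa using h.norm_point_le, by simpa using h.norm_functional_le,
    by simpa using h.apply_eq_one⟩

theorem midpoint_point (hx : IsContactPair T x f) (hz : IsContactPair T z f) :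
    IsContactPair T (midpoint ℝ x z) f where
  norm_point_le := by
    simpa using (convex_closedBall (0 : X) 1).midpoint_mem (by simpa using hx.norm_point_le)
      (by simpa using hz.norm_point_le)
  norm_functional_le := hx.norm_functional_le
  apply_eq_one := by
    norm_num [midpoint_eq_smul_add, hx.apply_eq_one, hz.apply_eq_one]

theorem apply_eq_one_symm
    (hrigid : ∀ x f z g, IsContactPair T x f → IsContactPair T z g → |f (T z)| = 1)
    (hx : IsContactPair T x f) (hz : IsContactPair T z g) (hfz : f (T z) = 1) : g (T x) = 1 := by
  refine ((abs_eq zero_le_one).mp (hrigid z g x f hz hx)).resolve_right fun hgx ↦ ?_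
  have hmid : IsContactPair T (midpoint ℝ x z) f :=
    hx.midpoint_point ⟨hz.norm_point_le, hx.norm_functional_le, hfz⟩
  have hgmid : g (T (midpoint ℝ x z)) = 0 := by
    simp [midpoint_eq_smul_add, hz.apply_eq_one, hgx]
  simpa [hgmid] using hrigid _ _ _ _ hz hmid

theorem apply_mul_apply_eq_one
    (hrigid : ∀ x f z g, IsContactPair T x f → IsContactPair T z g → |f (T z)| = 1)
    (hx : IsContactPair T x f) (hz : IsContactPair T z g) : f (T z) * g (T x) = 1 := by
  rcases (abs_eq zero_le_one).mp (hrigid x f z g hx hz) with hfz | hfz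
  · rw [hfz, apply_eq_one_symm hrigid hx hz hfz, one_mul]
  · have hgx : g (T x) = -1 := by
      simpa [neg_eq_iff_eq_neg] using apply_eq_one_symm hrigid hx hz.neg (by simp [hfz])
    simp [hfz, hgx]

end IsContactPair

theorem eventually_norm_add_smul_le_one [FiniteDimensional ℝ X] [FiniteDimensional ℝ Y]
    {T S : X →L[ℝ] Y} (hT : ‖T‖ ≤ 1) (hS : ∀ x f, IsContactPair T x f → f (S x) < 0) :
    ∀ᶠ t : ℝ in 𝓝[>] 0, ‖T + t • S‖ ≤ 1 := by
  have : ProperSpace X := FiniteDimensional.proper ℝ X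
  have : ProperSpace (Y →L[ℝ] ℝ) := FiniteDimensional.proper ℝ _
  have hlt := eventually_forall_add_mul_lt (c := 1)
    (K := Metric.closedBall (0 : X) 1 ×ˢ Metric.closedBall (0 : Y →L[ℝ] ℝ) 1)
    (a := fun p ↦ p.2 (T p.1)) (b := fun p ↦ p.2 (S p.1))
    ((isCompact_closedBall _ _).prod (isCompact_closedBall _ _)) (by fun_prop) (by fun_prop)
    (fun p hp ↦ ?_) (fun p hp h ↦ hS p.1 p.2 ⟨by simpa using hp.1, by simpa using hp.2, h⟩)
  · filter_upwards [hlt] with t ht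
    refine ContinuousLinearMap.opNorm_le_of_unit_norm zero_le_one fun x hx ↦ ?_
    obtain ⟨f, hf, hfx⟩ := exists_dual_vector'' ℝ ((T + t • S) x)
    calc
      ‖(T + t • S) x‖ = f (T x) + t * f (S x) := by simpa using hfx.symm
      _ ≤ 1 := (ht (x, f) ⟨by simp [hx], by simpa using hf⟩).le
  · have hx : ‖p.1‖ ≤ 1 := by simpa using hp.1
    have hf : ‖p.2‖ ≤ 1 := by simpa using hp.2
    calc
      p.2 (T p.1) ≤ ‖p.2 (T p.1)‖ := Real.le_norm_self _
      _ ≤ 1 * ‖T p.1‖ := p.2.le_of_opNorm_le hf _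
      _ ≤ 1 := by simpa using (T.unit_le_opNorm _ hx).trans hT

/-- Maximality of the volume of `T(B_X)` among the operators in the unit ball, expressed through
the factors `|det A|` by which left multiplication by `A : Y → Y` changes that volume. If `T` is
invertible, then every operator `X → Y` is of the form `A ∘ T`, so no competitor is lost. -/
structure HasMaximalVolume (T : X →L[ℝ] Y) : Prop where
  norm_le_one : ‖T‖ ≤ 1
  abs_det_le_one : ∀ A : Y →L[ℝ] Y, ‖A.comp T‖ ≤ 1 → |A.det| ≤ 1

theorem exists_hasMaximalVolume [FiniteDimensional ℝ X] [FiniteDimensional ℝ Y]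
    (hXY : finrank ℝ X = finrank ℝ Y) : ∃ T : X →L[ℝ] Y, HasMaximalVolume T := by
  have : ProperSpace (X →L[ℝ] Y) := FiniteDimensional.proper ℝ _
  let e : Y ≃L[ℝ] X := ContinuousLinearEquiv.ofFinrankEq hXY.symm
  let volume (T : X →L[ℝ] Y) : ℝ := |(T.comp (e : Y →L[ℝ] X)).det|
  have volume_comp (A : Y →L[ℝ] Y) (T : X →L[ℝ] Y) : volume (A.comp T) = |A.det| * volume T := by
    rw [← abs_mul]
    exact congrArg abs (LinearMap.det_comp (A : Y →ₗ[ℝ] Y) (T.comp (e : Y →L[ℝ] X)))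
  obtain ⟨T, hT, hTmax⟩ := (isCompact_closedBall (0 : X →L[ℝ] Y) 1).exists_isMaxOn
    ⟨0, by simp⟩ (f := volume)
    (ContinuousLinearMap.continuous_det.comp (by fun_prop)).abs.continuousOn
  have volume_pos : 0 < volume T := by
    let c : ℝ := (‖(e.symm : X →L[ℝ] Y)‖ + 1)⁻¹
    have hc : 0 < c := by positivity
    have hmem : c • (e.symm : X →L[ℝ] Y) ∈ Metric.closedBall 0 1 := by
      rw [mem_closedBall_zero_iff, norm_smul, Real.norm_of_nonneg hc.le,
        inv_mul_le_one₀ (by positivity)]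
      linarith
    have volume_smul_symm : volume (c • (e.symm : X →L[ℝ] Y)) = c ^ finrank ℝ Y := by
      have comp_eq : (c • (e.symm : X →L[ℝ] Y)).comp (e : Y →L[ℝ] X) = c • 1 := by ext; simp
      simp only [volume, comp_eq]
      simp [ContinuousLinearMap.det, abs_of_pos hc]
    calc
      0 < c ^ finrank ℝ Y := pow_pos hc _
      _ = volume (c • (e.symm : X →L[ℝ] Y)) := volume_smul_symm.symm
      _ ≤ volume T := hTmax hmem
  refine ⟨T, by simpa using hT, fun A hA ↦ le_of_mul_le_mul_right ?_ volume_pos⟩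
  calc
    |A.det| * volume T = volume (A.comp T) := (volume_comp A T).symm
    _ ≤ volume T := hTmax (by simpa using hA)
    _ = 1 * volume T := (one_mul _).symm

namespace HasMaximalVolume

variable [FiniteDimensional ℝ X] [FiniteDimensional ℝ Y] {T : X →L[ℝ] Y}

theorem exists_isContactPair_nonneg (hT : HasMaximalVolume T) {D : Y →L[ℝ] Y}
    (hD : 0 < LinearMap.trace ℝ Y D) : ∃ x f, IsContactPair T x f ∧ 0 ≤ f (D (T x)) := by
  by_contra! hneg
  have eventually_norm_le := eventually_norm_add_smul_le_one (S := D.comp T) hT.norm_le_one hneg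
  obtain ⟨t, hnorm, hdet⟩ := (eventually_norm_le.and (eventually_one_lt_det_one_add_smul hD)).exists
  have hdet_le : |(1 + t • D).det| ≤ 1 :=
    hT.abs_det_le_one _ (by simpa [ContinuousLinearMap.add_comp, ContinuousLinearMap.one_def]
      using hnorm)
  exact (hdet.trans_le ((le_abs_self _).trans hdet_le)).false

theorem exists_isContactPair [Nontrivial Y] (hT : HasMaximalVolume T) :
    ∃ x f, IsContactPair T x f := by
  have trace_pos : 0 < LinearMap.trace ℝ Y (1 : Y →L[ℝ] Y) := by simp [finrank_pos]
  obtain ⟨x, f, h, -⟩ := hT.exists_isContactPair_nonneg trace_pos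
  exact ⟨x, f, h⟩

theorem exists_isContactPair_abs_apply_ne_one (hT : HasMaximalVolume T) (hY : 2 ≤ finrank ℝ Y) :
    ∃ x f z g, IsContactPair T x f ∧ IsContactPair T z g ∧ |f (T z)| ≠ 1 := by
  by_contra! hrigid
  have : Nontrivial Y := nontrivial_of_finrank_pos (R := ℝ) (by lia)
  obtain ⟨x, f, hxf⟩ := hT.exists_isContactPair
  let D : Y →L[ℝ] Y := (2 : ℝ) • 1 - (3 : ℝ) • f.smulRight (T x)
  have trace_D_pos : 0 < LinearMap.trace ℝ Y D := by
    have trace_D : LinearMap.trace ℝ Y D = 2 * finrank ℝ Y - 3 := by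
      simp [D, hxf.apply_eq_one]
    have : (2 : ℝ) ≤ finrank ℝ Y := mod_cast hY
    linarith
  obtain ⟨z, g, hzg, hD⟩ := hT.exists_isContactPair_nonneg trace_D_pos
  have hcoherent : f (T z) * g (T x) = 1 := hxf.apply_mul_apply_eq_one hrigid hzg
  have apply_D : g (D (T z)) = -1 := by
    norm_num [D, hzg.apply_eq_one, hcoherent]
  linarith

end HasMaximalVolume

theorem infDist_face_union_pos {f : Y →L[ℝ] ℝ} {y z : Y} (hy : ‖y‖ = 1) (hfy : f y = 1)
    (hfz : |f z| ≠ 1) :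
    0 < Metric.infDist z ({y : Y | ‖y‖ = 1 ∧ f y = 1} ∪ {y : Y | ‖y‖ = 1 ∧ f y = -1}) := by
  have isClosed_face (c : ℝ) : IsClosed {y : Y | ‖y‖ = 1 ∧ f y = c} :=
    (isClosed_eq continuous_norm continuous_const).inter (isClosed_eq f.continuous continuous_const)
  refine (((isClosed_face 1).union (isClosed_face (-1))).notMem_iff_infDist_pos
    ⟨y, Or.inl ⟨hy, hfy⟩⟩).mp ?_
  rintro (⟨-, h⟩ | ⟨-, h⟩) <;> simp [h] at hfz

end Contact

theorem exists_operator_two_contact_points_general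
    {X Y : Type*} [NormedAddCommGroup X] [NormedSpace ℝ X]
    [NormedAddCommGroup Y] [NormedSpace ℝ Y]
    (hXY : finrank ℝ X = finrank ℝ Y) (hY : 2 ≤ finrank ℝ Y) :
    ∃ T : X →L[ℝ] Y, ‖T‖ = 1 ∧
      T '' Metric.closedBall 0 1 ⊆ Metric.closedBall 0 1 ∧
      ∃ y₁ y₂ : Y,
        y₁ ∈ T '' Metric.closedBall 0 1 ∩ Metric.sphere 0 1 ∧
        y₂ ∈ T '' Metric.closedBall 0 1 ∩ Metric.sphere 0 1 ∧
        ∃ y₁' : Y →L[ℝ] ℝ, ‖y₁'‖ = 1 ∧ y₁' y₁ = 1 ∧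
          0 < Metric.infDist y₂
            ({y : Y | ‖y‖ = 1 ∧ y₁' y = 1} ∪ {y : Y | ‖y‖ = 1 ∧ y₁' y = -1}) := by
  have : FiniteDimensional ℝ X := .of_finrank_pos (by lia)
  have : FiniteDimensional ℝ Y := .of_finrank_pos (by lia)
  obtain ⟨T, hT⟩ := exists_hasMaximalVolume hXY
  have hT_le := hT.norm_le_one
  obtain ⟨x, f, z, g, hxf, hzg, hfz⟩ := hT.exists_isContactPair_abs_apply_ne_one hY
  refine ⟨T, hT_le.antisymm hxf.one_le_opNorm, ?_, T x, T z, hxf.apply_mem hT_le,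
    hzg.apply_mem hT_le, f, hxf.norm_functional_eq_one hT_le, hxf.apply_eq_one,
    infDist_face_union_pos (hxf.norm_apply_eq_one hT_le) hxf.apply_eq_one hfz⟩
  rintro _ ⟨x, hx, rfl⟩
  simpa using (T.unit_le_opNorm x (by simpa using hx)).trans hT_le

/-- For any 2-dimensional real normed spaces `X` and `Y` there is a norm-one
operator `T : X → Y` with `T(B_X) ⊆ B_Y` such that `T(B_X) ∩ S_Y` contains two
points `y₁, y₂` and there exists `y₁' ∈ S_{Y*}` with `y₁'(y₁) = 1` and
`dist(y₂, F(y₁') ∪ F(-y₁')) > 0`. -/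
theorem exists_operator_two_contact_points
    {X Y : Type*} [NormedAddCommGroup X] [NormedSpace ℝ X]
    [NormedAddCommGroup Y] [NormedSpace ℝ Y]
    (hX : Module.finrank ℝ X = 2) (hY : Module.finrank ℝ Y = 2) :
    ∃ T : X →L[ℝ] Y, ‖T‖ = 1 ∧
      T '' Metric.closedBall 0 1 ⊆ Metric.closedBall 0 1 ∧
      ∃ y₁ y₂ : Y,
        y₁ ∈ T '' Metric.closedBall 0 1 ∩ Metric.sphere 0 1 ∧
        y₂ ∈ T '' Metric.closedBall 0 1 ∩ Metric.sphere 0 1 ∧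
        ∃ y₁' : Y →L[ℝ] ℝ, ‖y₁'‖ = 1 ∧ y₁' y₁ = 1 ∧
          0 < Metric.infDist y₂
            ({y : Y | ‖y‖ = 1 ∧ y₁' y = 1} ∪ {y : Y | ‖y‖ = 1 ∧ y₁' y = -1}) :=
  exists_operator_two_contact_points_general (hX.trans hY.symm) hY.ge
end

section
/- Let X and Y be 2-dimensional real normed spaces. Then there exist δ > 0, a sequence (T_n) of bounded linear operators from X to Y with ‖T_n‖ = 1 for every n ∈ ℕ, and a point x₀ ∈ S_X, such that ‖T_n(x₀)‖ → 1 as n → ∞, but dist(x₀, {x ∈ S_X : ‖T_n(x)‖ = 1}) > δ for every n ∈ ℕ. -/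
/-!
Fix an injective linear map `J : W → X` from a two-dimensional subspace `W` of `Y`, and let `T`
maximise `|det (S ∘ J)|` over the unit ball of the operators `S : X → W`. If `B` is an endomorphism
of `W` with `|det B| ≥ 1`, then `‖B ∘ T‖ ≥ 1`, since otherwise a multiple of `B ∘ T` would beat `T`.
Let `T` attain its norm at `x₀`, and let `P` be a projection onto the line through `T x₀`. For small
`ε > 0` the operator `B ε = (1 - ε) • id + ε • 3 • (id - P)` has determinant
`(1 - ε) * (1 + 2 * ε) ≥ 1`, so `‖B ε ∘ T‖ ≥ 1`, although `B ε` shrinks `T x₀`. By convexity, a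
unit vector `z` with `‖B ε (T z)‖ ≥ 1` satisfies `‖3 • (id - P) (T z)‖ ≥ 1`, and this keeps `z` away
from `x₀`, where `(id - P) ∘ T` vanishes, uniformly in `ε`. Normalising `B ε ∘ T` and letting
`ε → 0` gives the sequence.
-/

open Filter Topology

theorem exists_submodule_finrank_eq_of_le_rank {R M : Type*} [Ring R] [Nontrivial R]
    [StrongRankCondition R] [AddCommGroup M] [Module R M] {n : ℕ} (h : n ≤ Module.rank R M) :
    ∃ N : Submodule R M, Module.Finite R N ∧ Module.finrank R N = n := by
  obtain ⟨f, hf⟩ := Module.le_rank_iff_exists_linearMap.1 h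
  exact ⟨f.range, inferInstance, by simpa using LinearMap.finrank_range_of_inj hf⟩

theorem det_smul_id_sub_smulRight {K V : Type*} [Field K] [AddCommGroup V] [Module K V]
    [FiniteDimensional K V] {a : K} (ha : a ≠ 0) (f : Module.Dual K V) (v : V) :
    LinearMap.det (a • LinearMap.id - f.smulRight v) =
      a ^ Module.finrank K V * (1 - f v / a) := by
  have htransvection : a • LinearMap.id - f.smulRight v =
      a • LinearMap.transvection f (-a⁻¹ • v) := by
    ext x
    simp [LinearMap.transvection.apply, smul_smul, mul_left_comm a, ha, sub_eq_add_neg]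
  rw [htransvection, LinearMap.det_smul, LinearMap.transvection.det, map_smul]
  simp only [smul_eq_mul]
  ring

section Homogeneous

variable {𝕜 E : Type*} [RCLike 𝕜] [NormedAddCommGroup E] [NormedSpace 𝕜 E]
  [FiniteDimensional 𝕜 E]

theorem exists_norm_le_one_forall_le_norm_pow_mul {d : ℕ} {f : E → ℝ} (hf : Continuous f)
    (hd : ∀ (c : 𝕜) x, f (c • x) = ‖c‖ ^ d * f x) :
    ∃ x, ‖x‖ ≤ 1 ∧ ∀ y, f y ≤ ‖y‖ ^ d * f x := by
  have : ProperSpace E := FiniteDimensional.proper 𝕜 E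
  obtain ⟨x, hx, hmax⟩ := (isCompact_closedBall (0 : E) 1).exists_isMaxOn
    (Metric.nonempty_closedBall.2 zero_le_one) hf.continuousOn
  refine ⟨x, mem_closedBall_zero_iff.1 hx, fun y ↦ ?_⟩
  let z : E := (‖y‖⁻¹ : 𝕜) • y
  have hz : z ∈ Metric.closedBall 0 1 := by
    simpa [z, norm_smul] using inv_mul_le_one (a := ‖y‖)
  have hyz : y = (‖y‖ : 𝕜) • z := by
    rcases eq_or_ne y 0 with rfl | hy
    · simp
    · simp [z, hy]
  calc
    f y = ‖y‖ ^ d * f z := by conv_lhs => rw [hyz, hd, RCLike.norm_ofReal, abs_norm]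
    _ ≤ ‖y‖ ^ d * f x := by gcongr; exact hmax hz

theorem exists_norm_eq_one_norm_apply_eq_opNorm {F : Type*} [NormedAddCommGroup F]
    [NormedSpace 𝕜 F] {T : E →L[𝕜] F} (hT : T ≠ 0) : ∃ x, ‖x‖ = 1 ∧ ‖T x‖ = ‖T‖ := by
  obtain ⟨x, hx, hmax⟩ := exists_norm_le_one_forall_le_norm_pow_mul (𝕜 := 𝕜) (d := 1)
    (f := fun x ↦ ‖T x‖) (by fun_prop) (by simp [norm_smul])
  have hTx : ‖T‖ ≤ ‖T x‖ := T.opNorm_le_bound (norm_nonneg _) fun y ↦ by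
    simpa [mul_comm] using hmax y
  have hx_one : 1 ≤ ‖x‖ :=
    le_of_mul_le_mul_left (by simpa using hTx.trans (T.le_opNorm x)) (norm_pos_iff.2 hT)
  exact ⟨x, hx.antisymm hx_one, (T.unit_le_opNorm x hx).antisymm hTx⟩

end Homogeneous

section Determinant

variable {𝕜 X W : Type*} [RCLike 𝕜] [NormedAddCommGroup X] [NormedSpace 𝕜 X]
  [NormedAddCommGroup W] [NormedSpace 𝕜 W]

/-- A norm-one operator `T : X → W` is *determinant-extremal* if composing it with an endomorphism
of `W` whose determinant has modulus at least one never brings its norm below one. Such operators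
are obtained by maximising a determinant over the unit ball. -/
structure IsDetExtremal (T : X →L[𝕜] W) : Prop where
  norm_eq_one : ‖T‖ = 1
  one_le_norm_comp : ∀ B : W →L[𝕜] W, 1 ≤ ‖B.det‖ → 1 ≤ ‖B ∘L T‖

theorem exists_isDetExtremal [FiniteDimensional 𝕜 X] [FiniteDimensional 𝕜 W] [Nontrivial W]
    (h : Module.finrank 𝕜 W ≤ Module.finrank 𝕜 X) : ∃ T : X →L[𝕜] W, IsDetExtremal T := by
  set d := Module.finrank 𝕜 W
  have hd : d ≠ 0 := Module.finrank_pos.ne'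
  obtain ⟨J', hJ'⟩ := finrank_le_iff_exists_linearMap.1 h
  obtain ⟨R', hR'⟩ := J'.exists_leftInverse_of_injective (LinearMap.ker_eq_bot.2 hJ')
  let J : W →L[𝕜] X := J'.toContinuousLinearMap
  let R : X →L[𝕜] W := R'.toContinuousLinearMap
  have hRJ : R ∘L J = .id 𝕜 W := ContinuousLinearMap.coe_injective hR'
  let D (S : X →L[𝕜] W) : ℝ := ‖(S ∘L J).det‖
  have hD_smul (c : 𝕜) (S : X →L[𝕜] W) : D (c • S) = ‖c‖ ^ d * D S := by
    simp [D, d, ContinuousLinearMap.det, LinearMap.smul_comp]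
  have hD_comp (B : W →L[𝕜] W) (S : X →L[𝕜] W) : D (B ∘L S) = ‖B.det‖ * D S := by
    simp only [D, ContinuousLinearMap.det, ContinuousLinearMap.toLinearMap_comp,
      LinearMap.comp_assoc, LinearMap.det_comp, norm_mul]
  have hD_cont : Continuous D :=
    (ContinuousLinearMap.continuous_det.comp (by fun_prop : Continuous (· ∘L J))).norm
  obtain ⟨T, hT, hmax⟩ := exists_norm_le_one_forall_le_norm_pow_mul hD_cont hD_smul
  have hDT : 0 < D T := by
    have hDR : D R = 1 := by
      simp only [D, hRJ, ContinuousLinearMap.det, ContinuousLinearMap.coe_id, LinearMap.det_id,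
        norm_one]
    exact pos_of_mul_pos_right (zero_lt_one.trans_le (hDR ▸ hmax R)) (by positivity)
  have hT_comp (B : W →L[𝕜] W) (hB : 1 ≤ ‖B.det‖) : 1 ≤ ‖B ∘L T‖ := by
    have hdet : ‖B.det‖ ≤ ‖B ∘L T‖ ^ d :=
      le_of_mul_le_mul_right (hD_comp B T ▸ hmax (B ∘L T)) hDT
    exact (one_le_pow_iff_of_nonneg (norm_nonneg _) hd).1 (hB.trans hdet)
  have hT_id : 1 ≤ ‖T‖ := by
    simpa using hT_comp (.id 𝕜 W) (by simp [ContinuousLinearMap.det])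
  exact ⟨T, hT.antisymm hT_id, hT_comp⟩

theorem norm_det_lineMap_id [FiniteDimensional 𝕜 W] {f : StrongDual 𝕜 W} {y : W} (hf : f y = 1)
    {ε : ℝ} (hε : 0 ≤ ε) :
    ‖ContinuousLinearMap.det
        (AffineMap.lineMap (.id 𝕜 W) ((3 : 𝕜) • (.id 𝕜 W - f.smulRight y)) (ε : 𝕜))‖ =
      (1 + 2 * ε) ^ Module.finrank 𝕜 W * |1 - 3 * ε / (1 + 2 * ε)| := by
  let a : ℝ := 1 + 2 * ε
  have ha : 0 < a := by positivity
  have hlineMap : ((AffineMap.lineMap (.id 𝕜 W) ((3 : 𝕜) • (.id 𝕜 W - f.smulRight y)) (ε : 𝕜) :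
      W →L[𝕜] W) : W →ₗ[𝕜] W) = (a : 𝕜) • (LinearMap.id : W →ₗ[𝕜] W) -
        (((3 * ε : ℝ) : 𝕜) • (f : Module.Dual 𝕜 W)).smulRight y := by
    ext x
    simp [a, AffineMap.lineMap_apply_module]
    module
  have hfactor : 1 - (((3 * ε : ℝ) : 𝕜) • (f : Module.Dual 𝕜 W)) y / (a : 𝕜) =
      ((1 - 3 * ε / a : ℝ) : 𝕜) := by simp [hf]
  rw [ContinuousLinearMap.det, hlineMap,
    det_smul_id_sub_smulRight (RCLike.ofReal_ne_zero.2 ha.ne'), hfactor, norm_mul, norm_pow,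
    RCLike.norm_of_nonneg ha.le, RCLike.norm_ofReal]

-- The determinant is at least `1 + ε + O(ε²)`; a factor of `2` in place of `3` would only give
-- `1 - ε²` when `W` is two-dimensional.
theorem one_le_norm_det_lineMap_id [FiniteDimensional 𝕜 W] (hW : 1 < Module.finrank 𝕜 W)
    {f : StrongDual 𝕜 W} {y : W} (hf : f y = 1) {ε : ℝ} (hε : 0 ≤ ε) (hε' : ε ≤ 1 / 2) :
    1 ≤ ‖ContinuousLinearMap.det
      (AffineMap.lineMap (.id 𝕜 W) ((3 : 𝕜) • (.id 𝕜 W - f.smulRight y)) (ε : 𝕜))‖ := by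
  have ha : 1 ≤ 1 + 2 * ε := by linarith
  calc
    1 ≤ (1 + 2 * ε) * (1 - ε) := by nlinarith
    _ = (1 + 2 * ε) ^ 2 * (1 - 3 * ε / (1 + 2 * ε)) := by field_simp; ring
    _ ≤ (1 + 2 * ε) ^ 2 * |1 - 3 * ε / (1 + 2 * ε)| := by gcongr; exact le_abs_self _
    _ ≤ (1 + 2 * ε) ^ Module.finrank 𝕜 W * |1 - 3 * ε / (1 + 2 * ε)| := by gcongr; exact hW
    _ = _ := (norm_det_lineMap_id hf hε).symm

end Determinant

section Perturbation

variable {𝕜 X Y : Type*} [RCLike 𝕜] [NormedAddCommGroup X] [NormedSpace 𝕜 X]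
  [NormedAddCommGroup Y] [NormedSpace 𝕜 Y]

theorem one_le_norm_of_one_le_norm_lineMap {u v : Y} (hu : ‖u‖ ≤ 1) {ε : ℝ}
    (hε : 0 < ε) (hε' : ε ≤ 1) (h : 1 ≤ ‖AffineMap.lineMap u v (ε : 𝕜)‖) : 1 ≤ ‖v‖ := by
  have hconvex : ‖AffineMap.lineMap u v (ε : 𝕜)‖ ≤ (1 - ε) * ‖u‖ + ε * ‖v‖ := by
    have hnorm : ‖(1 - ε : 𝕜)‖ = 1 - ε := by
      rw [← RCLike.ofReal_one, ← RCLike.ofReal_sub, RCLike.norm_of_nonneg (sub_nonneg.2 hε')]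
    rw [AffineMap.lineMap_apply_module]
    refine (norm_add_le _ _).trans_eq ?_
    rw [norm_smul, norm_smul, hnorm, RCLike.norm_of_nonneg hε.le]
  have hu_scaled : (1 - ε) * ‖u‖ ≤ 1 - ε := mul_le_of_le_one_right (sub_nonneg.2 hε') hu
  exact le_of_mul_le_mul_left (by linarith) hε

theorem one_le_norm_apply_of_one_le_norm_lineMap_apply {T V : X →L[𝕜] Y} (hT : ‖T‖ ≤ 1) {z : X}
    (hz : ‖z‖ ≤ 1) {ε : ℝ} (hε : 0 < ε) (hε' : ε ≤ 1)
    (h : 1 ≤ ‖(AffineMap.lineMap T V (ε : 𝕜) : X →L[𝕜] Y) z‖) : 1 ≤ ‖V z‖ := by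
  refine one_le_norm_of_one_le_norm_lineMap (𝕜 := 𝕜)
    ((T.unit_le_opNorm z hz).trans hT) hε hε' ?_
  simpa [AffineMap.lineMap_apply_module] using h

theorem tendsto_inv_norm_smul {ι : Type*} {l : Filter ι} {u : ι → Y} {y : Y} (hy : ‖y‖ = 1)
    (hu : Tendsto u l (𝓝 y)) : Tendsto (fun i ↦ (‖u i‖⁻¹ : 𝕜) • u i) l (𝓝 y) := by
  have hinv : Tendsto (fun i ↦ (‖u i‖⁻¹ : 𝕜)) l (𝓝 1) := by
    simpa [hy] using ((RCLike.continuous_ofReal (K := 𝕜)).tendsto ‖y‖).comp hu.norm |>.inv₀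
      (by simp [hy])
  simpa using hinv.smul hu

theorem inv_opNorm_le_infDist {V : X →L[𝕜] Y} {x : X} (hx : V x = 0) {s : Set X}
    (hs : s.Nonempty) (hV : ∀ z ∈ s, 1 ≤ ‖V z‖) : ‖V‖⁻¹ ≤ Metric.infDist x s := by
  refine (Metric.le_infDist hs).2 fun z hz ↦ ?_
  have hdist : 1 ≤ ‖V‖ * dist x z :=
    calc
      1 ≤ ‖V (x - z)‖ := by simpa [hx] using hV z hz
      _ ≤ ‖V‖ * dist x z := dist_eq_norm x z ▸ V.le_opNorm _
  have hV_pos : 0 < ‖V‖ := pos_of_mul_pos_left (zero_lt_one.trans_le hdist) dist_nonneg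
  exact (inv_le_iff_one_le_mul₀' hV_pos).2 hdist

/-- `V` is a *noncontracting direction* at `T` if `T` has norm one and attains it at the unit vector
`x₀`, while the operators `(1 - ε) • T + ε • V` with small `ε > 0` have norm at least one although
`V` vanishes at `x₀`. -/
structure IsNoncontractingDirection (T V : X →L[𝕜] Y) (x₀ : X) : Prop where
  norm_eq_one : ‖T‖ = 1
  norm_point_eq_one : ‖x₀‖ = 1
  norm_apply_eq_one : ‖T x₀‖ = 1
  apply_eq_zero : V x₀ = 0
  eventually_one_le_norm : ∀ᶠ ε : ℝ in 𝓝[>] 0, 1 ≤ ‖AffineMap.lineMap T V (ε : 𝕜)‖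

namespace IsNoncontractingDirection

theorem isometry_comp {Z : Type*} [NormedAddCommGroup Z] [NormedSpace 𝕜 Z]
    {T V : X →L[𝕜] Y} {x₀ : X} (h : IsNoncontractingDirection T V x₀) (ι : Y →ₗᵢ[𝕜] Z) :
    IsNoncontractingDirection (ι.toContinuousLinearMap ∘L T) (ι.toContinuousLinearMap ∘L V) x₀ where
  norm_eq_one := ι.norm_toContinuousLinearMap_comp.trans h.norm_eq_one
  norm_point_eq_one := h.norm_point_eq_one
  norm_apply_eq_one := by simpa using h.norm_apply_eq_one
  apply_eq_zero := by simp [h.apply_eq_zero]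
  eventually_one_le_norm := h.eventually_one_le_norm.mono fun ε hε ↦ by
    rw [← ι.norm_toContinuousLinearMap_comp] at hε
    simpa [AffineMap.lineMap_apply_module] using hε

theorem exists_seq [FiniteDimensional 𝕜 X] {T V : X →L[𝕜] Y} {x₀ : X}
    (h : IsNoncontractingDirection T V x₀) :
    ∃ δ > (0 : ℝ), ∃ S : ℕ → X →L[𝕜] Y, (∀ n, ‖S n‖ = 1) ∧ Tendsto S atTop (𝓝 T) ∧
      ∀ n, δ < Metric.infDist x₀ {x | ‖x‖ = 1 ∧ ‖S n x‖ = 1} := by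
  obtain ⟨ε, hε_tendsto, hε⟩ := exists_seq_forall_of_frequently
    (h.eventually_one_le_norm.and (Ioc_mem_nhdsGT zero_lt_one)).frequently
  let A (n : ℕ) : X →L[𝕜] Y := AffineMap.lineMap T V (ε n : 𝕜)
  have hA (n : ℕ) : 1 ≤ ‖A n‖ := (hε n).1
  have hA_ne (n : ℕ) : A n ≠ 0 := norm_pos_iff.1 (zero_lt_one.trans_le (hA n))
  have hA_tendsto : Tendsto A atTop (𝓝 T) := by
    have hε_coe : Tendsto (fun n ↦ (ε n : 𝕜)) atTop (𝓝 0) := by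
      simpa [Function.comp_def] using ((RCLike.continuous_ofReal (K := 𝕜)).tendsto 0).comp
        (tendsto_nhds_of_tendsto_nhdsWithin hε_tendsto)
    simpa using (tendsto_const_nhds (x := T)).lineMap (tendsto_const_nhds (x := V)) hε_coe
  let S (n : ℕ) : X →L[𝕜] Y := (‖A n‖⁻¹ : 𝕜) • A n
  have hS (n : ℕ) : ‖S n‖ = 1 := norm_smul_inv_norm (hA_ne n)
  have hA_apply (n : ℕ) (x : X) : ‖A n x‖ = ‖A n‖ * ‖S n x‖ := by simp [S, norm_smul, hA_ne n]
  have hV {n : ℕ} {z : X} (hz : ‖z‖ = 1 ∧ ‖S n z‖ = 1) : 1 ≤ ‖V z‖ := by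
    have hAz : 1 ≤ ‖A n z‖ := by simpa only [hA_apply, hz.2, mul_one] using hA n
    exact one_le_norm_apply_of_one_le_norm_lineMap_apply h.norm_eq_one.le hz.1.le
      (hε n).2.1 (hε n).2.2 hAz
  have hS_attained (n : ℕ) : {x | ‖x‖ = 1 ∧ ‖S n x‖ = 1}.Nonempty := by
    obtain ⟨z, hz, hSz⟩ :=
      exists_norm_eq_one_norm_apply_eq_opNorm (norm_ne_zero_iff.1 (hS n ▸ one_ne_zero))
    exact ⟨z, hz, hSz.trans (hS n)⟩
  have hV_pos : 0 < ‖V‖ := by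
    obtain ⟨z, hz⟩ := hS_attained 0
    exact zero_lt_one.trans_le ((hV hz).trans (V.unit_le_opNorm z hz.1.le))
  exact ⟨‖V‖⁻¹ / 2, by positivity, S, hS, tendsto_inv_norm_smul h.norm_eq_one hA_tendsto,
    fun n ↦ (half_lt_self (by positivity)).trans_le
      (inv_opNorm_le_infDist h.apply_eq_zero (hS_attained n) fun _ ↦ hV)⟩

end IsNoncontractingDirection

theorem IsDetExtremal.isNoncontractingDirection [FiniteDimensional 𝕜 Y] {T : X →L[𝕜] Y}
    (hT : IsDetExtremal T) (hY : 1 < Module.finrank 𝕜 Y) {x₀ : X} (hx₀ : ‖x₀‖ = 1)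
    (hTx₀ : ‖T x₀‖ = 1) {f : StrongDual 𝕜 Y} (hf : f (T x₀) = 1) :
    IsNoncontractingDirection T (((3 : 𝕜) • (.id 𝕜 Y - f.smulRight (T x₀))) ∘L T) x₀ where
  norm_eq_one := hT.norm_eq_one
  norm_point_eq_one := hx₀
  norm_apply_eq_one := hTx₀
  apply_eq_zero := by simp [hf]
  eventually_one_le_norm := by
    filter_upwards [Ioc_mem_nhdsGT (one_half_pos (α := ℝ))] with ε hε
    have hcomp := hT.one_le_norm_comp _ (one_le_norm_det_lineMap_id hY hf hε.1.le hε.2)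
    simpa only [AffineMap.lineMap_apply_module, ContinuousLinearMap.add_comp,
      ContinuousLinearMap.smul_comp, ContinuousLinearMap.id_comp] using hcomp

theorem exists_isNoncontractingDirection_of_finrank_le [FiniteDimensional 𝕜 X]
    [FiniteDimensional 𝕜 Y] (hY : 1 < Module.finrank 𝕜 Y)
    (hYX : Module.finrank 𝕜 Y ≤ Module.finrank 𝕜 X) :
    ∃ (T V : X →L[𝕜] Y) (x₀ : X), IsNoncontractingDirection T V x₀ := by
  have : Nontrivial Y := Module.nontrivial_of_finrank_pos (R := 𝕜) (zero_lt_one.trans hY)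
  obtain ⟨T, hT⟩ := exists_isDetExtremal hYX
  obtain ⟨x₀, hx₀, hTx₀⟩ :=
    exists_norm_eq_one_norm_apply_eq_opNorm (norm_ne_zero_iff.1 (hT.norm_eq_one ▸ one_ne_zero))
  rw [hT.norm_eq_one] at hTx₀
  obtain ⟨f, hf⟩ := SeparatingDual.exists_eq_one (R := 𝕜)
    (norm_ne_zero_iff.1 (hTx₀ ▸ one_ne_zero))
  exact ⟨T, _, x₀, hT.isNoncontractingDirection hY hx₀ hTx₀ hf⟩

theorem exists_isNoncontractingDirection (hX : 1 < Module.finrank 𝕜 X)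
    (hY : 1 < Module.rank 𝕜 Y) :
    ∃ (T V : X →L[𝕜] Y) (x₀ : X), IsNoncontractingDirection T V x₀ := by
  have : FiniteDimensional 𝕜 X := Module.finite_of_finrank_pos (zero_lt_one.trans hX)
  obtain ⟨W, _, hW⟩ := exists_submodule_finrank_eq_of_le_rank (R := 𝕜) (M := Y) (n := 2)
    (by simpa using Cardinal.two_le_iff_one_lt.2 hY)
  obtain ⟨T, V, x₀, h⟩ := exists_isNoncontractingDirection_of_finrank_le (𝕜 := 𝕜) (X := X) (Y := W)
    (by lia) (by lia)
  exact ⟨_, _, x₀, h.isometry_comp W.subtypeₗᵢ⟩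

end Perturbation

theorem two_dimensional_fails_P2_quantitative_general {𝕜 X Y : Type*} [RCLike 𝕜]
    [NormedAddCommGroup X] [NormedSpace 𝕜 X] [NormedAddCommGroup Y] [NormedSpace 𝕜 Y]
    (hX : 1 < Module.finrank 𝕜 X) (hY : 1 < Module.rank 𝕜 Y) :
    ∃ δ > (0 : ℝ), ∃ (T : ℕ → X →L[𝕜] Y) (x₀ : X), ‖x₀‖ = 1 ∧
      (∀ n, ‖T n‖ = 1) ∧
      Tendsto (fun n ↦ ‖T n x₀‖) atTop (𝓝 1) ∧
      ∀ n : ℕ, δ < Metric.infDist x₀ {x : X | ‖x‖ = 1 ∧ ‖T n x‖ = 1} := by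
  have : FiniteDimensional 𝕜 X := Module.finite_of_finrank_pos (zero_lt_one.trans hX)
  obtain ⟨T, V, x₀, h⟩ := exists_isNoncontractingDirection hX hY
  obtain ⟨δ, hδ, S, hS, hST, hdist⟩ := h.exists_seq
  refine ⟨δ, hδ, S, x₀, h.norm_point_eq_one, hS, ?_, hdist⟩
  have hSTx₀ : Tendsto (fun n ↦ S n x₀) atTop (𝓝 (T x₀)) :=
    ((ContinuousLinearMap.apply 𝕜 Y x₀).continuous.tendsto T).comp hST
  simpa only [h.norm_apply_eq_one] using hSTx₀.norm

/-- For 2-dimensional real normed spaces `X` and `Y`, there are `δ > 0`, norm-one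
operators `T n : X → Y`, and `x₀ ∈ S_X` such that `‖T n x₀‖ → 1` but
`dist(x₀, {x ∈ S_X : ‖T n x‖ = 1}) > δ` for every `n`. -/
theorem two_dimensional_fails_P2_quantitative
    {X Y : Type*} [NormedAddCommGroup X] [NormedSpace ℝ X]
    [NormedAddCommGroup Y] [NormedSpace ℝ Y]
    (hX : Module.finrank ℝ X = 2) (hY : Module.finrank ℝ Y = 2) :
    ∃ δ > (0 : ℝ), ∃ (T : ℕ → X →L[ℝ] Y) (x₀ : X), ‖x₀‖ = 1 ∧
      (∀ n, ‖T n‖ = 1) ∧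
      Tendsto (fun n => ‖T n x₀‖) atTop (𝓝 1) ∧
      ∀ n : ℕ, δ < Metric.infDist x₀ {x : X | ‖x‖ = 1 ∧ ‖T n x‖ = 1} := by
  exact two_dimensional_fails_P2_quantitative_general (hX ▸ one_lt_two)
    (Module.lt_rank_of_lt_finrank (hY ▸ one_lt_two))
end

section
/- Let Y be a 2-dimensional real normed space. Then for every ε ∈ [0, 2] there exist y₁, y₂ ∈ S_Y such that ‖y₁ − y₂‖ = ε and ‖y₁ + y₂‖ = √(4 − ε²). -/
/-!
Transport the norm to the plane and let `A`, `B` be the endpoints of a chord of length `ε` of the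
unit circle. As the chord makes half a turn, the radial projection of each of `A`, `B`, `S = A + B`
and `D = A - B` to the unit circle sweeps out half of the unit ball, of area `P / 2` say. Writing
`ω` for the area form, this gives `∫ ω(A, A') = ∫ ω(B, B') = P` and `∫ ω(D, D') = ε² P`, because
`A`, `B` and `D` have constant norm. The identity
`ω(S, S') + ω(D, D') = 2 (ω(A, A') + ω(B, B'))` yields `∫ ω(S, S') = (4 - ε²) P`. But `ω(S, S')` is
`‖S‖²` times a nonnegative function of integral `P`, so `‖S‖² = 4 - ε²` somewhere along the way by
the mean value theorem for integrals.
-/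

namespace HilbertianPair

open Complex Filter Function MeasureTheory Set Topology
open scoped Real

attribute [local instance] Complex.finrank_real_complex_fact

local notation "ω" => Complex.orientation.areaForm

theorem norm_sub_le_norm_sub_of_smul_eq {E : Type*} [NormedAddCommGroup E] [NormedSpace ℝ E]
    {x y z : E} (hx : ‖x‖ = 1) (hy : ‖y‖ = 1) (hz : ‖z‖ = 1) {l m n : ℝ} (hl : 0 ≤ l) (hm : 0 ≤ m)
    (hn : 0 < n) (h : n • y = l • x + m • z) : ‖y - x‖ ≤ ‖z - x‖ := by
  have hnlm : n ≤ l + m := by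
    simpa [norm_smul, hx, hy, hz, abs_of_nonneg, hl, hm, hn.le] using
      (congrArg norm h).trans_le (norm_add_le (l • x) (m • z))
  have hy_sub : (l + m) * ‖y - x‖ ≤ (l + m - n) + m * ‖z - x‖ := calc
    (l + m) * ‖y - x‖ = ‖(l + m - n) • y + m • (z - x)‖ := by
      rw [← norm_smul_of_nonneg (by positivity)]
      congr 1
      linear_combination (norm := module) h
    _ ≤ (l + m - n) + m * ‖z - x‖ := by
      grw [norm_add_le, norm_smul_of_nonneg (sub_nonneg.2 hnlm), norm_smul_of_nonneg hm, hy,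
        mul_one]
  have hz_sub : l + m ≤ n + l * ‖z - x‖ := calc
    l + m = ‖(l + m) • z‖ := by rw [norm_smul_of_nonneg (by positivity), hz, mul_one]
    _ = ‖n • y + l • (z - x)‖ := by rw [h]; congr 1; module
    _ ≤ n + l * ‖z - x‖ := by
      grw [norm_add_le, norm_smul_of_nonneg hn.le, norm_smul_of_nonneg hl, hy, mul_one]
  exact le_of_mul_le_mul_left (by linarith) (hn.trans_le hnlm)

theorem areaForm_smul_eq (x y z : ℂ) : ω x z • y = ω y z • x + ω x y • z := by
  apply Complex.ext <;> simp [Complex.areaForm] <;> ring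

theorem absolutelyContinuousOnInterval_of_locallyLipschitz {X : Type*} [PseudoMetricSpace X]
    {f : ℝ → X} (hf : LocallyLipschitz f) (p q : ℝ) : AbsolutelyContinuousOnInterval f p q :=
  (hf.locallyLipschitzOn.exists_lipschitzOnWith_of_compact isCompact_uIcc).elim
    fun _ hK => hK.absolutelyContinuousOnInterval

theorem locallyLipschitz_comp_of_contDiffAt {X E F : Type*} [PseudoEMetricSpace X]
    [NormedAddCommGroup E] [NormedSpace ℝ E] [NormedAddCommGroup F] [NormedSpace ℝ F]
    {f : E → F} {g : X → E} (hf : ∀ x, ContDiffAt ℝ 1 f (g x)) (hg : LocallyLipschitz g) :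
    LocallyLipschitz (fun x => f (g x)) := by
  intro x
  obtain ⟨K, s, hs, hfK⟩ := (hf x).exists_lipschitzOnWith
  obtain ⟨L, t, ht, hgL⟩ := hg x
  exact ⟨K * L, t ∩ g ⁻¹' s, inter_mem ht (hg.continuous.continuousAt hs),
    hfK.comp (hgL.mono inter_subset_left) fun _ hy => hy.2⟩

theorem ae_differentiableAt_of_locallyLipschitz {F : Type*} [NormedAddCommGroup F]
    [NormedSpace ℝ F] [FiniteDimensional ℝ F] {f : ℝ → F} (hf : LocallyLipschitz f) :
    ∀ᵐ t, DifferentiableAt ℝ f t :=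
  LocallyBoundedVariationOn.ae_differentiableAt fun p q _ _ =>
    (absolutelyContinuousOnInterval_of_locallyLipschitz hf p q).boundedVariationOn.mono
      (inter_subset_right.trans Icc_subset_uIcc)

variable {Y : Type*} [NormedAddCommGroup Y] [NormedSpace ℝ Y] (T : ℂ ≃L[ℝ] Y)

/-- The point in direction `t` of the curve `‖T z‖ = 1`, the unit sphere of the norm pulled back
along `T`. -/
noncomputable def unitPoint (t : ℝ) : ℂ := ‖T (exp (t * I))‖⁻¹ • exp (t * I)

variable {T}

theorem norm_map_exp_pos (t : ℝ) : 0 < ‖T (exp (t * I))‖ := by simp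

theorem inv_norm_map_exp_pos (t : ℝ) : 0 < ‖T (exp (t * I))‖⁻¹ := inv_pos.2 (norm_map_exp_pos t)

theorem norm_map_unitPoint (t : ℝ) : ‖T (unitPoint T t)‖ = 1 := by
  rw [unitPoint, map_smul, norm_smul, norm_inv, norm_norm, inv_mul_cancel₀ (norm_map_exp_pos t).ne']

theorem antiperiodic_exp_ofReal_mul_I : Antiperiodic (fun t : ℝ => exp (t * I)) π := fun t => by
  simp [add_mul, exp_add]

theorem unitPoint_antiperiodic : Antiperiodic (unitPoint T) π := fun t => by
  simp [unitPoint, add_mul, exp_add]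

theorem areaForm_unitPoint_unitPoint (s t : ℝ) :
    ω (unitPoint T s) (unitPoint T t) =
      ‖T (exp (s * I))‖⁻¹ * ‖T (exp (t * I))‖⁻¹ * Real.sin (t - s) := by
  simp only [unitPoint, map_smul, LinearMap.smul_apply, smul_eq_mul, Complex.areaForm]
  simp only [mul_im, conj_re, exp_ofReal_mul_I_re, exp_ofReal_mul_I_im, conj_im, neg_mul,
    Real.sin_sub]
  ring

theorem areaForm_unitPoint_nonneg {s t : ℝ} (hst : s ≤ t) (hts : t ≤ s + π) :
    0 ≤ ω (unitPoint T s) (unitPoint T t) := by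
  rw [areaForm_unitPoint_unitPoint]
  have := Real.sin_nonneg_of_nonneg_of_le_pi (sub_nonneg.2 hst) (by linarith)
  positivity

theorem areaForm_unitPoint_pos {s t : ℝ} (hst : s < t) (hts : t < s + π) :
    0 < ω (unitPoint T s) (unitPoint T t) := by
  rw [areaForm_unitPoint_unitPoint]
  exact mul_pos (mul_pos (inv_norm_map_exp_pos s) (inv_norm_map_exp_pos t))
    (Real.sin_pos_of_pos_of_lt_pi (sub_pos.2 hst) (by linarith))

theorem areaForm_unitPoint_le_add {t₁ t₂ t₃ : ℝ} (h₁₂ : t₁ ≤ t₂) (h₂₃ : t₂ ≤ t₃)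
    (h₁₃ : t₃ ≤ t₁ + π) :
    ω (unitPoint T t₁) (unitPoint T t₃) ≤
      ω (unitPoint T t₁) (unitPoint T t₂) + ω (unitPoint T t₂) (unitPoint T t₃) := by
  have h := congrArg (fun z => ‖T z‖)
    (areaForm_smul_eq (unitPoint T t₁) (unitPoint T t₂) (unitPoint T t₃))
  simp only [map_add, map_smul] at h
  replace h := h.trans_le (norm_add_le _ _)
  rw [norm_smul_of_nonneg (areaForm_unitPoint_nonneg (h₁₂.trans h₂₃) h₁₃),
    norm_smul_of_nonneg (areaForm_unitPoint_nonneg h₂₃ (by linarith)),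
    norm_smul_of_nonneg (areaForm_unitPoint_nonneg h₁₂ (by linarith))] at h
  simpa only [norm_map_unitPoint, mul_one, add_comm] using h

theorem norm_map_unitPoint_sub_le_of_le_right {t₁ t₂ t₃ : ℝ} (h₁₂ : t₁ ≤ t₂) (h₂₃ : t₂ ≤ t₃)
    (h₁₃ : t₁ < t₃) (h₃₁ : t₃ < t₁ + π) :
    ‖T (unitPoint T t₂ - unitPoint T t₁)‖ ≤ ‖T (unitPoint T t₃ - unitPoint T t₁)‖ := by
  have h₁₂' := areaForm_unitPoint_nonneg (T := T) h₁₂ (by linarith)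
  have h₂₃' := areaForm_unitPoint_nonneg (T := T) h₂₃ (by linarith)
  have h₁₃' := areaForm_unitPoint_pos (T := T) h₁₃ h₃₁
  simp only [map_sub]
  refine norm_sub_le_norm_sub_of_smul_eq (norm_map_unitPoint t₁) (norm_map_unitPoint t₂)
    (norm_map_unitPoint t₃) h₂₃' h₁₂' h₁₃' ?_
  simp only [← map_smul, ← map_add, areaForm_smul_eq (unitPoint T t₁) (unitPoint T t₂)]

theorem norm_map_unitPoint_sub_le_of_le_left {t₁ t₂ t₃ : ℝ} (h₁₂ : t₁ ≤ t₂) (h₂₃ : t₂ ≤ t₃)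
    (h₁₃ : t₁ < t₃) (h₃₁ : t₃ < t₁ + π) :
    ‖T (unitPoint T t₃ - unitPoint T t₂)‖ ≤ ‖T (unitPoint T t₃ - unitPoint T t₁)‖ := by
  have h₁₂' := areaForm_unitPoint_nonneg (T := T) h₁₂ (by linarith)
  have h₂₃' := areaForm_unitPoint_nonneg (T := T) h₂₃ (by linarith)
  have h₁₃' := areaForm_unitPoint_pos (T := T) h₁₃ h₃₁
  simp only [map_sub, norm_sub_rev (T (unitPoint T t₃))]
  refine norm_sub_le_norm_sub_of_smul_eq (norm_map_unitPoint t₃) (norm_map_unitPoint t₂)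
    (norm_map_unitPoint t₁) h₁₂' h₂₃' h₁₃' ?_
  simp only [← map_smul, ← map_add, areaForm_smul_eq (unitPoint T t₁) (unitPoint T t₂), add_comm]

theorem contDiff_exp_ofReal_mul_I : ContDiff ℝ 1 fun t : ℝ => exp (t * I) :=
  (ofRealCLM.contDiff.mul contDiff_const).cexp

theorem locallyLipschitz_norm_map {w : ℝ → ℂ} (hw : LocallyLipschitz w) :
    LocallyLipschitz fun t => ‖T (w t)‖ :=
  (lipschitzWith_one_norm.comp T.lipschitz).locallyLipschitz.comp hw

theorem locallyLipschitz_unitPoint : LocallyLipschitz (unitPoint T) := by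
  have hexp := contDiff_exp_ofReal_mul_I.locallyLipschitz
  have hsmul (t : ℝ) : ContDiffAt ℝ 1 (fun p : ℝ × ℂ => p.1⁻¹ • p.2)
      (‖T (exp (t * I))‖, exp (t * I)) :=
    (contDiffAt_fst.inv (norm_map_exp_pos t).ne').smul contDiffAt_snd
  have hpair : LocallyLipschitz fun t : ℝ => (‖T (exp (t * I))‖, exp (t * I)) :=
    (locallyLipschitz_norm_map hexp).prodMk hexp
  exact locallyLipschitz_comp_of_contDiffAt (g := fun t : ℝ => (‖T (exp (t * I))‖, exp (t * I)))
    hsmul hpair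

variable (T) in
/-- Twice the rate at which the radial projection of `w` to the curve `‖T z‖ = 1` sweeps out area.
It is `0` where `w` vanishes or is not differentiable. -/
noncomputable def angularDensity (w : ℝ → ℂ) (t : ℝ) : ℝ := ω (w t) (deriv w t) / ‖T (w t)‖ ^ 2

variable (T) in
/-- The Euclidean area of the unit ball `‖T z‖ ≤ 1`, in polar coordinates: half the integral of the
squared radius over a full turn, hence the integral over half a turn. -/
noncomputable def unitBallArea : ℝ := ∫ t in 0..π, (‖T (exp (t * I))‖ ^ 2)⁻¹

theorem continuous_inv_norm_map_exp_sq : Continuous fun t : ℝ => (‖T (exp (t * I))‖ ^ 2)⁻¹ := by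
  refine Continuous.inv₀ (by fun_prop) fun t => ?_
  simp

theorem unitBallArea_pos : 0 < unitBallArea T :=
  intervalIntegral.intervalIntegral_pos_of_pos
    (continuous_inv_norm_map_exp_sq.intervalIntegrable _ _)
    (fun t => inv_pos.2 (pow_pos (norm_map_exp_pos t) 2)) Real.pi_pos

theorem unitBallArea_eq_integral (φ : ℝ) :
    ∫ t in φ..φ + π, (‖T (exp (t * I))‖ ^ 2)⁻¹ = unitBallArea T := by
  have hper : Periodic (fun t : ℝ => (‖T (exp (t * I))‖ ^ 2)⁻¹) π := fun t => by
    simp [add_mul, exp_add]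
  simpa [unitBallArea] using hper.intervalIntegral_add_eq φ 0

theorem norm_sq_mul_angularDensity (w : ℝ → ℂ) (t : ℝ) :
    ‖T (w t)‖ ^ 2 * angularDensity T w t = ω (w t) (deriv w t) := by
  obtain hw | hw := eq_or_ne (w t) 0
  · simp [hw]
  · exact mul_div_cancel₀ _ (by simpa using hw)

theorem angularDensity_smul_exp {r θ : ℝ → ℝ} {t : ℝ} (hr : DifferentiableAt ℝ r t)
    (hθ : DifferentiableAt ℝ θ t) (hr₀ : r t ≠ 0) :
    angularDensity T (fun s => r s • exp (θ s * I)) t =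
      (‖T (exp (θ t * I))‖ ^ 2)⁻¹ * deriv θ t := by
  have hexp : HasDerivAt (fun s => exp (θ s * I)) (exp (θ t * I) * (deriv θ t * I)) t :=
    (hθ.hasDerivAt.ofReal_comp.mul_const I).cexp
  have harea : ω (r t • exp (θ t * I)) (deriv (fun s => r s • exp (θ s * I)) t) =
      r t ^ 2 * deriv θ t := by
    rw [(hr.hasDerivAt.fun_smul hexp).deriv, Complex.areaForm]
    simp only [real_smul, map_mul, conj_ofReal, mul_im, mul_re, ofReal_re, conj_re,
      exp_ofReal_mul_I_re, ofReal_im, conj_im, exp_ofReal_mul_I_im, mul_neg, zero_mul, neg_zero,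
      sub_zero, add_im, I_im, mul_one, I_re, mul_zero, add_zero, sub_self, zero_sub, add_re,
      neg_mul]
    linear_combination (r t ^ 2 * deriv θ t) * Real.cos_sq_add_sin_sq (θ t)
  rw [angularDensity, harea, map_smul, norm_smul, mul_pow, Real.norm_eq_abs, sq_abs]
  field_simp

-- `hre` keeps `w`, turned back by the angle `t + φ`, in the half-plane where `arg` is smooth.
theorem exists_locallyLipschitz_angle {w : ℝ → ℂ} (hw : LocallyLipschitz w)
    (hanti : Antiperiodic w π) {φ : ℝ} (hre : ∀ t : ℝ, 0 < (w t / exp ((t + φ : ℝ) * I)).re) :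
    ∃ θ : ℝ → ℝ, LocallyLipschitz θ ∧ (∀ t, θ (t + π) = θ t + π) ∧
      ∀ t, w t = ‖w t‖ • exp (θ t * I) := by
  set q : ℝ → ℂ := fun t => w t / exp ((t + φ : ℝ) * I) with hq
  have hqL : LocallyLipschitz q := by
    have hexp : ContDiff ℝ 1 fun t : ℝ => (exp ((t + φ : ℝ) * I))⁻¹ :=
      (contDiff_exp_ofReal_mul_I.comp (contDiff_id.add contDiff_const)).inv fun t => exp_ne_zero _
    have hmul : ContDiff ℝ 1 fun p : ℂ × ℂ => p.1 * p.2 := contDiff_fst.mul contDiff_snd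
    exact hmul.locallyLipschitz.comp (hw.prodMk hexp.locallyLipschitz)
  have hargL : LocallyLipschitz fun t => (q t).arg := by
    simp only [← log_im]
    exact imCLM.lipschitz.locallyLipschitz.comp (locallyLipschitz_comp_of_contDiffAt
      (fun t => (contDiffAt_log (Or.inl (hre t))).restrict_scalars ℝ) hqL)
  have hqper : Periodic q π := fun t => by
    have hexpπ := antiperiodic_exp_ofReal_mul_I (t + φ)
    simp only [hq, hanti t, add_right_comm t π φ, hexpπ, neg_div_neg_eq]
  refine ⟨fun t => t + φ + (q t).arg,
    (LocallyLipschitz.id.add (.const φ)).add hargL, fun t => ?_, fun t => ?_⟩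
  · simp only [hqper t]
    ring
  · have hnorm : ‖q t‖ = ‖w t‖ := by rw [hq, norm_div, norm_exp_ofReal_mul_I, div_one]
    calc w t = q t * exp ((t + φ : ℝ) * I) := (div_mul_cancel₀ _ (exp_ne_zero _)).symm
      _ = ‖q t‖ * exp ((q t).arg * I) * exp ((t + φ : ℝ) * I) := by rw [norm_mul_exp_arg_mul_I]
      _ = ‖w t‖ • exp ((t + φ + (q t).arg : ℝ) * I) := by
        rw [hnorm, mul_assoc, ← exp_add, ← add_mul, ← ofReal_add, add_comm (q t).arg, real_smul]

theorem integral_angularDensity {w : ℝ → ℂ} (hw : LocallyLipschitz w)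
    (hanti : Antiperiodic w π) {φ : ℝ} (hre : ∀ t : ℝ, 0 < (w t / exp ((t + φ : ℝ) * I)).re) :
    IntervalIntegrable (angularDensity T w) volume 0 π ∧
      ∫ t in 0..π, angularDensity T w t = unitBallArea T := by
  obtain ⟨θ, hθ, hθπ, hwθ⟩ := exists_locallyLipschitz_angle hw hanti hre
  set area : ℝ → ℝ := fun x => ∫ t in 0..x, (‖T (exp (t * I))‖ ^ 2)⁻¹ with harea
  have harea' (x : ℝ) : HasDerivAt area (‖T (exp (x * I))‖ ^ 2)⁻¹ x :=
    (continuous_inv_norm_map_exp_sq.integral_hasStrictDerivAt 0 x).hasDerivAt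
  have hareaC : ContDiff ℝ 1 area := contDiff_one_iff_deriv.2
    ⟨fun x => (harea' x).differentiableAt,
      (funext fun x => (harea' x).deriv) ▸ continuous_inv_norm_map_exp_sq⟩
  have hareaθ : AbsolutelyContinuousOnInterval (area ∘ θ) 0 π :=
    absolutelyContinuousOnInterval_of_locallyLipschitz (hareaC.locallyLipschitz.comp hθ) 0 π
  have hderiv : deriv (area ∘ θ) =ᵐ[volume] angularDensity T w := by
    have hwL : LocallyLipschitz fun t => ‖w t‖ := lipschitzWith_one_norm.locallyLipschitz.comp hw
    filter_upwards [ae_differentiableAt_of_locallyLipschitz hθ,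
      ae_differentiableAt_of_locallyLipschitz hwL] with t hθt hwt
    have hw₀ : ‖w t‖ ≠ 0 := norm_ne_zero_iff.2 fun h => (hre t).ne' (by simp [h])
    have hdens := angularDensity_smul_exp (T := T) hwt hθt hw₀
    rw [← funext hwθ] at hdens
    rw [((harea' (θ t)).comp t hθt.hasDerivAt).deriv, hdens]
  refine ⟨hareaθ.intervalIntegrable_deriv.congr_ae (ae_restrict_of_ae hderiv), ?_⟩
  rw [← intervalIntegral.integral_congr_ae (hderiv.mono fun t ht _ => ht),
    hareaθ.integral_deriv_eq_sub, comp_apply, comp_apply, ← zero_add π, hθπ, harea,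
    intervalIntegral.integral_interval_sub_left
      (continuous_inv_norm_map_exp_sq.intervalIntegrable _ _)
      (continuous_inv_norm_map_exp_sq.intervalIntegrable _ _),
    unitBallArea_eq_integral]

theorem norm_map_unitPoint_sub_mono {b b' a' a : ℝ} (hb : b ≤ b') (hab : b' < a') (ha : a' ≤ a)
    (hba : a < b + π) :
    ‖T (unitPoint T a' - unitPoint T b')‖ ≤ ‖T (unitPoint T a - unitPoint T b)‖ :=
  (norm_map_unitPoint_sub_le_of_le_left hb hab.le (by linarith) (by linarith)).trans
    (norm_map_unitPoint_sub_le_of_le_right (by linarith) ha (by linarith) hba)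

variable (T) in
/-- The length, in the norm `‖T ·‖`, of the chord of the curve `‖T z‖ = 1` whose endpoints are at
angle `h` on either side of the direction `t`. -/
noncomputable def chordLength (t h : ℝ) : ℝ := ‖T (unitPoint T (t + h) - unitPoint T (t - h))‖

theorem continuous_chordLength (t : ℝ) : Continuous (chordLength T t) := by
  have := locallyLipschitz_unitPoint (T := T).continuous
  unfold chordLength
  fun_prop

theorem chordLength_zero (t : ℝ) : chordLength T t 0 = 0 := by simp [chordLength]

theorem chordLength_pi_div_two (t : ℝ) : chordLength T t (π / 2) = 2 := by
  have hanti : unitPoint T (t - π / 2) = -unitPoint T (t + π / 2) := by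
    rw [← unitPoint_antiperiodic.sub_eq]
    congr 1
    ring
  rw [chordLength, hanti, sub_neg_eq_add, ← two_smul ℝ, map_smul, norm_smul, norm_map_unitPoint]
  norm_num

theorem chordLength_periodic (h : ℝ) : Periodic (fun t => chordLength T t h) π := fun t => by
  simp only [chordLength, add_right_comm t π h, add_sub_right_comm t π h,
    unitPoint_antiperiodic (t + h), unitPoint_antiperiodic (t - h)]
  rw [← neg_sub', map_neg, norm_neg]

variable (T) in
/-- The half-opening at direction `t` of the chord of length `ε`. The smallest one is chosen because
chords of length `ε` need not be unique. -/
noncomputable def halfOpening (ε t : ℝ) : ℝ := sInf {h ∈ Icc 0 (π / 2) | ε ≤ chordLength T t h}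

variable {ε : ℝ}

theorem isLeast_halfOpening (hε : ε ≤ 2) (t : ℝ) :
    IsLeast {h ∈ Icc 0 (π / 2) | ε ≤ chordLength T t h} (halfOpening T ε t) := by
  refine IsClosed.isLeast_csInf ?_ ⟨π / 2, ?_⟩ ⟨0, fun h hh => hh.1.1⟩
  · exact isClosed_Icc.inter (isClosed_le continuous_const (continuous_chordLength t))
  · exact ⟨right_mem_Icc.2 (by positivity), by rwa [chordLength_pi_div_two]⟩

theorem chordLength_halfOpening (hε₀ : 0 ≤ ε) (hε₂ : ε ≤ 2) (t : ℝ) :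
    chordLength T t (halfOpening T ε t) = ε := by
  obtain ⟨⟨h₀, hπ⟩, hle⟩ := (isLeast_halfOpening (T := T) hε₂ t).1
  obtain ⟨h, hh, hchord⟩ := intermediate_value_Icc h₀ (continuous_chordLength t).continuousOn
    ⟨(chordLength_zero t).trans_le hε₀, hle⟩
  have hmin := (isLeast_halfOpening hε₂ t).2 ⟨⟨hh.1, hh.2.trans hπ⟩, hchord.ge⟩
  rwa [hh.2.antisymm hmin] at hchord

theorem halfOpening_mem_Ioo (hε : ε ∈ Ioo 0 2) (t : ℝ) : halfOpening T ε t ∈ Ioo 0 (π / 2) := by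
  have hchord := chordLength_halfOpening (T := T) hε.1.le hε.2.le t
  obtain ⟨h₀, hπ⟩ := (isLeast_halfOpening (T := T) hε.2.le t).1.1
  refine ⟨h₀.lt_of_ne fun h => hε.1.ne ?_, hπ.lt_of_ne fun h => hε.2.ne ?_⟩
  · rw [← hchord, ← h, chordLength_zero]
  · rw [← hchord, h, chordLength_pi_div_two]

-- If the chord at `t` were nested in the chord at `s`, a narrower chord at `s` still containing it
-- would have length at least `ε`, contradicting minimality.
theorem not_nested_halfOpening (hε : ε ∈ Ioo 0 2) (s t : ℝ) :
    ¬(s - halfOpening T ε s < t - halfOpening T ε t ∧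
      t + halfOpening T ε t < s + halfOpening T ε s) := by
  rintro ⟨hleft, hright⟩
  have hs := halfOpening_mem_Ioo (T := T) hε s
  have ht := halfOpening_mem_Ioo (T := T) hε t
  set h' := max (t + halfOpening T ε t - s) (s - (t - halfOpening T ε t))
  have hr : t + halfOpening T ε t - s ≤ h' := le_max_left _ _
  have hl : s - (t - halfOpening T ε t) ≤ h' := le_max_right _ _
  have hlt : h' < halfOpening T ε s := max_lt (by linarith) (by linarith)
  refine hlt.not_ge ((isLeast_halfOpening (T := T) hε.2.le s).2
    ⟨⟨by linarith [ht.1], by linarith [hs.2]⟩, ?_⟩)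
  rw [← chordLength_halfOpening (T := T) hε.1.le hε.2.le t]
  exact norm_map_unitPoint_sub_mono (by linarith) (by linarith [ht.1]) (by linarith)
    (by linarith [hs.2])

theorem lipschitzWith_halfOpening (hε : ε ∈ Ioo 0 2) : LipschitzWith 1 (halfOpening T ε) :=
  LipschitzWith.of_le_add fun s t => by
    by_contra! hlt
    rw [Real.dist_eq] at hlt
    exact not_nested_halfOpening hε s t
      ⟨by linarith [le_abs_self (s - t)], by linarith [neg_abs_le (s - t)]⟩

theorem halfOpening_periodic : Periodic (halfOpening T ε) π := fun t => by
  simp only [halfOpening, chordLength_periodic _ t]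

theorem areaForm_deriv_nonneg {w : ℝ → ℂ} {t : ℝ} (h : ∀ᶠ s in 𝓝[>] t, 0 ≤ ω (w t) (w s)) :
    0 ≤ ω (w t) (deriv w t) := by
  by_cases hw : DifferentiableAt ℝ w t
  · have hslope : Tendsto (fun s => ω (w t) (slope w t s)) (𝓝[>] t) (𝓝 (ω (w t) (deriv w t))) :=
      ((ω (w t)).continuous_of_finiteDimensional.tendsto _).comp
        (hw.hasDerivAt.tendsto_slope.mono_left (nhdsGT_le_nhdsNE t))
    refine ge_of_tendsto hslope ?_
    filter_upwards [h, self_mem_nhdsWithin] with s hs hts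
    have := sub_pos.2 (mem_Ioi.1 hts)
    rw [slope_def_module, map_smul, map_sub, Orientation.areaForm_apply_self, sub_zero, smul_eq_mul]
    positivity
  · simp [deriv_zero_of_not_differentiableAt hw]

theorem areaForm_unitPoint_add_nonneg {b b' a a' : ℝ} (hb : b ≤ b') (hba : b' ≤ a) (ha : a ≤ a')
    (hab : a' ≤ b + π) :
    0 ≤ ω (unitPoint T a + unitPoint T b) (unitPoint T a' + unitPoint T b') := by
  have hright := areaForm_unitPoint_le_add (T := T) ha hab (by linarith)
  have hleft := areaForm_unitPoint_le_add (T := T) (t₁ := a - π) (by linarith) hb (by linarith)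
  simp only [unitPoint_antiperiodic b, unitPoint_antiperiodic.sub_eq, map_neg,
    LinearMap.neg_apply] at hright hleft
  simp only [map_add, LinearMap.add_apply]
  linarith [Complex.orientation.areaForm_swap (unitPoint T a) (unitPoint T b),
    Complex.orientation.areaForm_swap (unitPoint T a') (unitPoint T b)]

theorem areaForm_add_deriv_add_areaForm_sub_deriv {u v : ℝ → ℂ} {t : ℝ}
    (hu : DifferentiableAt ℝ u t) (hv : DifferentiableAt ℝ v t) :
    ω (u t + v t) (deriv (u + v) t) + ω (u t - v t) (deriv (u - v) t) =
      2 * (ω (u t) (deriv u t) + ω (v t) (deriv v t)) := by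
  rw [deriv_add hu hv, deriv_sub hu hv]
  simp only [map_add, map_sub, LinearMap.add_apply, LinearMap.sub_apply]
  ring

theorem re_unitPoint_div_exp (s φ : ℝ) :
    (unitPoint T s / exp (φ * I)).re = ‖T (exp (s * I))‖⁻¹ * Real.cos (s - φ) := by
  rw [unitPoint, smul_div_assoc, ← exp_sub, ← sub_mul, ← ofReal_sub, smul_re,
    exp_ofReal_mul_I_re, smul_eq_mul]

variable (T) in
/-- The endpoint at `t + h t` of a moving chord with half-opening `h`; the other endpoint is
`chordEnd T (-h)`. -/
noncomputable def chordEnd (h : ℝ → ℝ) (t : ℝ) : ℂ := unitPoint T (t + h t)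

variable {h : ℝ → ℝ}

theorem locallyLipschitz_chordEnd (hL : LocallyLipschitz h) : LocallyLipschitz (chordEnd T h) :=
  locallyLipschitz_unitPoint.comp (LocallyLipschitz.id.add hL)

theorem chordEnd_antiperiodic (hper : Periodic h π) : Antiperiodic (chordEnd T h) π := fun t => by
  rw [chordEnd, hper, add_right_comm, unitPoint_antiperiodic, chordEnd]

theorem re_chordEnd_div_exp (φ t : ℝ) :
    (chordEnd T h t / exp ((t + φ : ℝ) * I)).re =
      ‖T (exp ((t + h t : ℝ) * I))‖⁻¹ * Real.cos (h t - φ) := by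
  rw [chordEnd, re_unitPoint_div_exp, add_sub_add_left_eq_sub]

theorem integral_angularDensity_chordEnd (hL : LocallyLipschitz h) (hper : Periodic h π)
    (hh : ∀ t, h t ∈ Ioo (-(π / 2)) (π / 2)) :
    IntervalIntegrable (angularDensity T (chordEnd T h)) volume 0 π ∧
      ∫ t in 0..π, angularDensity T (chordEnd T h) t = unitBallArea T := by
  refine integral_angularDensity (φ := 0) (locallyLipschitz_chordEnd hL)
    (chordEnd_antiperiodic hper) fun t => ?_
  rw [re_chordEnd_div_exp, sub_zero]
  exact mul_pos (inv_norm_map_exp_pos _) (Real.cos_pos_of_mem_Ioo (hh t))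

theorem integral_angularDensity_chordEnd_add (hL : LocallyLipschitz h) (hper : Periodic h π)
    (hh : ∀ t, h t ∈ Ioo 0 (π / 2)) :
    IntervalIntegrable (angularDensity T (chordEnd T h + chordEnd T (-h))) volume 0 π ∧
      ∫ t in 0..π, angularDensity T (chordEnd T h + chordEnd T (-h)) t = unitBallArea T := by
  have hper_neg : Periodic (-h) π := hper.comp Neg.neg
  have hanti : Antiperiodic (chordEnd T h + chordEnd T (-h)) π := fun t => by
    simp only [Pi.add_apply, chordEnd_antiperiodic hper t, chordEnd_antiperiodic hper_neg t,
      neg_add]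
  refine integral_angularDensity (φ := 0)
    ((locallyLipschitz_chordEnd hL).add (locallyLipschitz_chordEnd hL.neg)) hanti fun t => ?_
  rw [Pi.add_apply, add_div, add_re, re_chordEnd_div_exp, re_chordEnd_div_exp, Pi.neg_apply,
    sub_zero, sub_zero, Real.cos_neg]
  have hcos := Real.cos_pos_of_mem_Ioo
    (Ioo_subset_Ioo_left (neg_nonpos.2 Real.pi_div_two_pos.le) (hh t))
  exact add_pos (mul_pos (inv_norm_map_exp_pos _) hcos) (mul_pos (inv_norm_map_exp_pos _) hcos)

theorem integral_angularDensity_chordEnd_sub (hL : LocallyLipschitz h) (hper : Periodic h π)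
    (hh : ∀ t, h t ∈ Ioo 0 (π / 2)) :
    IntervalIntegrable (angularDensity T (chordEnd T h - chordEnd T (-h))) volume 0 π ∧
      ∫ t in 0..π, angularDensity T (chordEnd T h - chordEnd T (-h)) t = unitBallArea T := by
  have hper_neg : Periodic (-h) π := hper.comp Neg.neg
  have hanti : Antiperiodic (chordEnd T h - chordEnd T (-h)) π := fun t => by
    simp only [Pi.sub_apply, chordEnd_antiperiodic hper t, chordEnd_antiperiodic hper_neg t,
      neg_sub_neg, neg_sub]
  refine integral_angularDensity (φ := π / 2)
    ((locallyLipschitz_chordEnd hL).sub (locallyLipschitz_chordEnd hL.neg)) hanti fun t => ?_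
  rw [Pi.sub_apply, sub_div, sub_re, re_chordEnd_div_exp, re_chordEnd_div_exp, Pi.neg_apply,
    Real.cos_sub_pi_div_two, Real.cos_sub_pi_div_two, Real.sin_neg, mul_neg, sub_neg_eq_add]
  have hsin := Real.sin_pos_of_pos_of_lt_pi (hh t).1 (by linarith [(hh t).2, Real.pi_pos])
  exact add_pos (mul_pos (inv_norm_map_exp_pos _) hsin) (mul_pos (inv_norm_map_exp_pos _) hsin)

theorem areaForm_chordEnd_add_deriv_nonneg (hL : LipschitzWith 1 h)
    (hh : ∀ t, h t ∈ Ioo 0 (π / 2)) (t : ℝ) :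
    0 ≤ ω ((chordEnd T h + chordEnd T (-h)) t) (deriv (chordEnd T h + chordEnd T (-h)) t) := by
  refine areaForm_deriv_nonneg ?_
  have hsub : Continuous fun s => s - h s := continuous_id.sub hL.continuous
  have hadd : Continuous fun s => s + h s := continuous_id.add hL.continuous
  have hleft : ∀ᶠ s in 𝓝 t, s - h s < t + h t :=
    hsub.continuousAt.eventually_lt_const (by linarith [(hh t).1])
  have hright : ∀ᶠ s in 𝓝 t, s + h s < t - h t + π :=
    hadd.continuousAt.eventually_lt_const (by linarith [(hh t).2])
  filter_upwards [nhdsWithin_le_nhds hleft, nhdsWithin_le_nhds hright, self_mem_nhdsWithin]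
    with s hs hs' hts
  have hdist := hL.dist_le_mul s t
  rw [Real.dist_eq, Real.dist_eq, NNReal.coe_one, one_mul, abs_of_pos (sub_pos.2 (mem_Ioi.1 hts)),
    abs_le] at hdist
  simp only [Pi.add_apply, chordEnd, Pi.neg_apply, ← sub_eq_add_neg]
  exact areaForm_unitPoint_add_nonneg (by linarith) hs.le (by linarith) hs'.le

theorem areaForm_chordEnd_deriv (t : ℝ) :
    ω (chordEnd T h t) (deriv (chordEnd T h) t) = angularDensity T (chordEnd T h) t := by
  rw [angularDensity, chordEnd, norm_map_unitPoint, one_pow, div_one]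

theorem norm_sq_mul_angularDensity_chordEnd_add_ae (hL : LocallyLipschitz h)
    (hchord : ∀ t, chordLength T t (h t) = ε) :
    ∀ᵐ t, ‖T ((chordEnd T h + chordEnd T (-h)) t)‖ ^ 2 *
      angularDensity T (chordEnd T h + chordEnd T (-h)) t =
        2 * (angularDensity T (chordEnd T h) t + angularDensity T (chordEnd T (-h)) t) -
          ε ^ 2 * angularDensity T (chordEnd T h - chordEnd T (-h)) t := by
  filter_upwards [ae_differentiableAt_of_locallyLipschitz (locallyLipschitz_chordEnd (T := T) hL),
    ae_differentiableAt_of_locallyLipschitz (locallyLipschitz_chordEnd (T := T) hL.neg)]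
    with t hAt hBt
  have hε : ‖T ((chordEnd T h - chordEnd T (-h)) t)‖ = ε := hchord t
  have hpar := areaForm_add_deriv_add_areaForm_sub_deriv hAt hBt
  rw [areaForm_chordEnd_deriv, areaForm_chordEnd_deriv, ← Pi.add_apply, ← Pi.sub_apply,
    ← norm_sq_mul_angularDensity (T := T), ← norm_sq_mul_angularDensity (T := T), hε] at hpar
  exact eq_sub_of_add_eq hpar

theorem integral_norm_sq_mul_angularDensity_chordEnd_add (hL : LocallyLipschitz h)
    (hper : Periodic h π) (hh : ∀ t, h t ∈ Ioo 0 (π / 2))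
    (hchord : ∀ t, chordLength T t (h t) = ε) :
    ∫ t in 0..π, ‖T ((chordEnd T h + chordEnd T (-h)) t)‖ ^ 2 *
        angularDensity T (chordEnd T h + chordEnd T (-h)) t = (4 - ε ^ 2) * unitBallArea T := by
  obtain ⟨hAi, hA⟩ := integral_angularDensity_chordEnd (T := T) hL hper fun t =>
    Ioo_subset_Ioo_left (neg_nonpos.2 Real.pi_div_two_pos.le) (hh t)
  obtain ⟨hBi, hB⟩ := integral_angularDensity_chordEnd (T := T) hL.neg (hper.comp Neg.neg)
    fun t => ⟨neg_lt_neg (hh t).2, (neg_neg_of_pos (hh t).1).trans (by positivity)⟩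
  obtain ⟨hDi, hD⟩ := integral_angularDensity_chordEnd_sub (T := T) hL hper hh
  have hae := norm_sq_mul_angularDensity_chordEnd_add_ae hL hchord
  rw [intervalIntegral.integral_congr_ae (hae.mono fun t ht _ => ht),
    intervalIntegral.integral_sub ((hAi.add hBi).const_mul 2) (hDi.const_mul _),
    intervalIntegral.integral_const_mul, intervalIntegral.integral_const_mul,
    intervalIntegral.integral_add hAi hBi, hA, hB, hD]
  ring

theorem exists_norm_map_chordEnd_add_sq_eq (hL : LipschitzWith 1 h) (hper : Periodic h π)
    (hh : ∀ t, h t ∈ Ioo 0 (π / 2)) (hchord : ∀ t, chordLength T t (h t) = ε) :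
    ∃ t, ‖T (chordEnd T h t + chordEnd T (-h) t)‖ ^ 2 = 4 - ε ^ 2 := by
  have hLL := hL.locallyLipschitz
  obtain ⟨hi, harea⟩ := integral_angularDensity_chordEnd_add (T := T) hLL hper hh
  have hcont : Continuous fun t => ‖T ((chordEnd T h + chordEnd T (-h)) t)‖ ^ 2 :=
    (locallyLipschitz_norm_map ((locallyLipschitz_chordEnd hLL).add
      (locallyLipschitz_chordEnd hLL.neg))).continuous.pow 2
  obtain ⟨t, -, ht⟩ := exists_eq_const_mul_intervalIntegral_of_nonneg hcont.continuousOn hi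
    fun t _ => div_nonneg (areaForm_chordEnd_add_deriv_nonneg hL hh t) (by positivity)
  rw [integral_norm_sq_mul_angularDensity_chordEnd_add hLL hper hh hchord, harea] at ht
  exact ⟨t, (mul_right_cancel₀ unitBallArea_pos.ne' ht).symm⟩

end HilbertianPair

open HilbertianPair

/-- In any 2-dimensional real normed space `Y`, for every `ε ∈ [0, 2]` there exist
unit vectors `y₁, y₂` with `‖y₁ - y₂‖ = ε` and `‖y₁ + y₂‖ = √(4 - ε²)`. -/
theorem exists_hilbertian_pair
    {Y : Type*} [NormedAddCommGroup Y] [NormedSpace ℝ Y]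
    (hY : Module.finrank ℝ Y = 2) :
    ∀ ε ∈ Set.Icc (0 : ℝ) 2, ∃ y₁ y₂ : Y, ‖y₁‖ = 1 ∧ ‖y₂‖ = 1 ∧
      ‖y₁ - y₂‖ = ε ∧ ‖y₁ + y₂‖ = Real.sqrt (4 - ε ^ 2) := by
  intro ε ⟨hε₀, hε₂⟩
  have : FiniteDimensional ℝ Y := Module.finite_of_finrank_pos (by omega)
  let T : ℂ ≃L[ℝ] Y := .ofFinrankEq (Complex.finrank_real_complex.trans hY.symm)
  set y := T (unitPoint T 0)
  have hy : ‖y‖ = 1 := norm_map_unitPoint 0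
  have hy₂ : ‖y + y‖ = 2 := by rw [← two_smul ℝ, norm_smul, hy]; norm_num
  obtain rfl | hε₀ := hε₀.eq_or_lt
  · exact ⟨y, y, hy, hy, by simp, hy₂.trans (by norm_num)⟩
  obtain rfl | hε₂ := hε₂.eq_or_lt
  · exact ⟨y, -y, hy, (norm_neg y).trans hy, by rw [sub_neg_eq_add, hy₂], by norm_num⟩
  have hchord := chordLength_halfOpening (T := T) hε₀.le hε₂.le
  obtain ⟨t, ht⟩ := exists_norm_map_chordEnd_add_sq_eq (lipschitzWith_halfOpening ⟨hε₀, hε₂⟩)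
    halfOpening_periodic (halfOpening_mem_Ioo ⟨hε₀, hε₂⟩) hchord
  refine ⟨T (chordEnd T (halfOpening T ε) t), T (chordEnd T (-halfOpening T ε) t),
    norm_map_unitPoint _, norm_map_unitPoint _, ?_, ?_⟩
  · rw [← map_sub]
    exact hchord t
  · rw [← map_add, ← ht, Real.sqrt_sq (norm_nonneg _)]
end

section
/- Let X be a 2-dimensional real normed space whose norm does not satisfy the parallelogram law (equivalently, X is not isometric to a Hilbert space). Then there exist ε ∈ (0, 2) and x₁, x₂ ∈ S_X such that ‖x₁ − x₂‖ < ε and ‖x₁ + x₂‖ < √(4 − ε²). -/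
/-!
If no such pair exists, then `4 ≤ ‖u + v‖² + ‖u - v‖²` for all unit vectors `u`, `v`, and this
one-sided inequality forces the parallelogram law (a theorem of M. M. Day). On the span of two
given vectors, take an ellipsoid of maximal volume inside the unit ball, that is, a linear map `T`
from a Euclidean space with `‖T‖ ≤ 1` and extremal determinant. The vectors with `‖T z‖ = ‖z‖`
span the Euclidean space, for otherwise the ellipsoid could be enlarged by stretching it along a
direction orthogonal to all of them. If `z` and `w` are two such vectors of equal norm, the
parallelogram law for `z`, `w` and Day's inequality for `T z`, `T w` leave no room: `z + w` and
`z - w` are again such vectors. As these vectors form a closed cone, they are closed under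
addition, so `T` is an isometry.
-/

open Module Set
open scoped RealInnerProductSpace

lemma ordConnected_of_isClosed_of_forall_exists_between {α : Type*}
    [ConditionallyCompleteLinearOrder α] [TopologicalSpace α] [OrderTopology α] {K : Set α}
    (hK : IsClosed K) (h : ∀ s ∈ K, ∀ t ∈ K, s < t → ∃ r ∈ K, s < r ∧ r < t) :
    K.OrdConnected := by
  refine ⟨fun s hs t ht r hr ↦ ?_⟩
  by_contra hrK
  obtain ⟨p, ⟨⟨hsp, hpr⟩, hpK⟩, hp⟩ :=
    (isCompact_Icc (a := s) (b := r)).inter_right hK |>.exists_isGreatest ⟨s, ⟨le_rfl, hr.1⟩, hs⟩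
  obtain ⟨q, ⟨⟨hrq, hqt⟩, hqK⟩, hq⟩ :=
    (isCompact_Icc (a := r) (b := t)).inter_right hK |>.exists_isLeast ⟨t, ⟨hr.2, le_rfl⟩, ht⟩
  have hpr' : p < r := lt_of_le_of_ne hpr fun h ↦ hrK (h ▸ hpK)
  have hrq' : r < q := lt_of_le_of_ne hrq fun h ↦ hrK (h ▸ hqK)
  obtain ⟨x, hxK, hpx, hxq⟩ := h p hpK q hqK (hpr'.trans hrq')
  rcases le_total x r with hxr | hrx
  · exact hpx.not_ge (hp ⟨⟨hsp.trans hpx.le, hxr⟩, hxK⟩)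
  · exact hxq.not_ge (hq ⟨⟨hrx, hxq.le.trans hqt⟩, hxK⟩)

lemma convex_of_isClosed_of_openSegment_inter_nonempty {E : Type*} [AddCommGroup E] [Module ℝ E]
    [TopologicalSpace E] [IsTopologicalAddGroup E] [ContinuousSMul ℝ E] {C : Set E}
    (hC : IsClosed C) (h : ∀ z ∈ C, ∀ w ∈ C, (openSegment ℝ z w ∩ C).Nonempty) :
    Convex ℝ C := by
  refine convex_iff_segment_subset.2 fun z hz w hw ↦ ?_
  let γ : ℝ →ᵃ[ℝ] E := AffineMap.lineMap z w
  have hγ : Continuous γ := AffineMap.lineMap_continuous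
  have hord : (γ ⁻¹' C).OrdConnected := by
    refine ordConnected_of_isClosed_of_forall_exists_between (hC.preimage hγ)
      fun s hs t ht hst ↦ ?_
    obtain ⟨p, hp, hpC⟩ := h _ hs _ ht
    rw [← image_openSegment, openSegment_eq_Ioo hst] at hp
    obtain ⟨r, hr, rfl⟩ := hp
    exact ⟨r, hpC, hr⟩
  rw [segment_eq_image_lineMap]
  exact image_subset_iff.2 (hord.out (by simpa [γ] using hz) (by simpa [γ] using hw))

lemma exists_lt_one_norm_map_le_of_isClosed_cone {E F : Type*} [NormedAddCommGroup E]
    [NormedSpace ℝ E] [ProperSpace E] [NormedAddCommGroup F] [NormedSpace ℝ F] (T : E →L[ℝ] F)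
    {C : Set E} (hC : IsClosed C) (hcone : ∀ w ∈ C, ∀ r : ℝ, 0 < r → r • w ∈ C)
    (hT : ∀ w ∈ C, w ≠ 0 → ‖T w‖ < ‖w‖) :
    ∃ m ∈ Ico (0 : ℝ) 1, ∀ w ∈ C, ‖T w‖ ≤ m * ‖w‖ := by
  have normalize_mem : ∀ w ∈ C, w ≠ 0 → ‖w‖⁻¹ • w ∈ Metric.sphere 0 1 ∩ C := fun w hw hw0 ↦
    ⟨by simp [norm_smul, hw0], hcone w hw _ (by positivity)⟩
  rcases (Metric.sphere (0 : E) 1 ∩ C).eq_empty_or_nonempty with hempty | hne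
  · refine ⟨0, ⟨le_rfl, one_pos⟩, fun w hw ↦ ?_⟩
    obtain rfl : w = 0 := by
      by_contra hw0
      exact (hempty ▸ normalize_mem w hw hw0 : _ ∈ (∅ : Set E))
    simp
  · obtain ⟨w₀, ⟨hw₀, hw₀C⟩, hmax⟩ := ((isCompact_sphere (0 : E) 1).inter_right hC).exists_isMaxOn
      hne (f := fun w ↦ ‖T w‖) (by fun_prop)
    rw [mem_sphere_zero_iff_norm] at hw₀
    have hw₀0 : w₀ ≠ 0 := by rintro rfl; simp at hw₀
    refine ⟨‖T w₀‖, ⟨norm_nonneg _, hw₀ ▸ hT w₀ hw₀C hw₀0⟩, fun w hw ↦ ?_⟩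
    rcases eq_or_ne w 0 with rfl | hw0
    · simp
    · have hle : ‖T (‖w‖⁻¹ • w)‖ ≤ ‖T w₀‖ := hmax (normalize_mem w hw hw0)
      rwa [map_smul, norm_smul, norm_inv, norm_norm, inv_mul_le_iff₀ (by positivity),
        mul_comm] at hle

section AxialScaling

variable {E : Type*} [NormedAddCommGroup E] [InnerProductSpace ℝ E]

/-- For a unit vector `f`, the linear map which scales by `a` along `f` and by `b` on the
orthogonal complement of `f`. -/
noncomputable def axialScaling (f : E) (a b : ℝ) : E →L[ℝ] E :=
  b • ContinuousLinearMap.id ℝ E + (a - b) • (innerSL ℝ f).smulRight f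

lemma axialScaling_apply (f : E) (a b : ℝ) (w : E) :
    axialScaling f a b w = b • w + ((a - b) * ⟪f, w⟫) • f := by
  simp [axialScaling, smul_smul]

lemma norm_axialScaling_sq {f : E} (hf : ‖f‖ = 1) (a b : ℝ) (w : E) :
    ‖axialScaling f a b w‖ ^ 2 = b ^ 2 * ‖w‖ ^ 2 + (a ^ 2 - b ^ 2) * ⟪f, w⟫ ^ 2 := by
  rw [axialScaling_apply, norm_add_sq_real, norm_smul, norm_smul, real_inner_smul_left,
    real_inner_smul_right, real_inner_comm, hf, mul_pow, mul_pow, Real.norm_eq_abs,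
    Real.norm_eq_abs, sq_abs, sq_abs]
  ring

lemma mul_norm_le_norm_axialScaling {f : E} (hf : ‖f‖ = 1) {a b : ℝ} (ha : 0 ≤ a) (hab : a ≤ b)
    (w : E) : a * ‖w‖ ≤ ‖axialScaling f a b w‖ := by
  have hinner : ⟪f, w⟫ ^ 2 ≤ ‖w‖ ^ 2 := sq_le_sq.2 <| by
    simpa [hf] using abs_real_inner_le_norm f w
  refine le_of_sq_le_sq ?_ (norm_nonneg _)
  rw [norm_axialScaling_sq hf]
  nlinarith [mul_nonneg (sub_nonneg.2 (pow_le_pow_left₀ ha hab 2)) (sub_nonneg.2 hinner)]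

lemma det_axialScaling [FiniteDimensional ℝ E] {f : E} (hf : ‖f‖ = 1) (a : ℝ) {b : ℝ}
    (hb : b ≠ 0) : (axialScaling f a b).det = a / b * b ^ finrank ℝ E := by
  have hdecomp : (axialScaling f a b : E →ₗ[ℝ] E) =
      b • LinearMap.transvection (innerₛₗ ℝ f) (((a - b) / b) • f) := by
    ext w
    have hscale : b * (⟪f, w⟫ * ((a - b) / b)) = (a - b) * ⟪f, w⟫ := by field_simp
    simp [axialScaling_apply, LinearMap.transvection.apply, smul_smul, hscale]
  rw [ContinuousLinearMap.det, hdecomp, LinearMap.det_smul, LinearMap.transvection.det,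
    map_smul, innerₛₗ_apply_apply, real_inner_self_eq_norm_sq, hf, smul_eq_mul]
  field_simp
  ring

/-- The ellipsoid `‖axialScaling f (1 - k * s) (1 + s) w‖ ≤ 1` is longer than the unit ball along
`f` and thinner across, and for small `s` it is still mapped into the unit ball by `T`: near the
hyperplane `f^⊥` the thinning helps, away from it `T` contracts uniformly. -/
lemma exists_norm_map_le_norm_axialScaling [FiniteDimensional ℝ E] {F : Type*}
    [NormedAddCommGroup F] [NormedSpace ℝ F] {T : E →L[ℝ] F} (hT : ∀ z, ‖T z‖ ≤ ‖z‖) {f : E}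
    (hf : ‖f‖ = 1) (hcontact : ∀ z, ‖T z‖ = ‖z‖ → ⟪f, z⟫ = 0) {k : ℝ} (hk : 0 ≤ k) :
    ∃ s > 0, k * s < 1 ∧ ∀ w, ‖T w‖ ≤ ‖axialScaling f (1 - k * s) (1 + s) w‖ := by
  obtain ⟨m, ⟨hm0, hm1⟩, hm⟩ := exists_lt_one_norm_map_le_of_isClosed_cone T
    (C := {w | ‖w‖ ^ 2 ≤ (k + 1) * ⟪f, w⟫ ^ 2}) (isClosed_le (by fun_prop) (by fun_prop))
    (fun w hw r _ ↦ by
      rw [mem_ofPred_eq, norm_smul, real_inner_smul_right, mul_pow, mul_pow, Real.norm_eq_abs,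
        sq_abs, mul_left_comm]
      exact mul_le_mul_of_nonneg_left hw (sq_nonneg r))
    (fun w hw hw0 ↦ (hT w).lt_of_ne fun h ↦ by
      rw [mem_ofPred_eq, hcontact w h] at hw
      have : 0 < ‖w‖ := norm_pos_iff.2 hw0
      nlinarith)
  obtain ⟨s, hs⟩ : ∃ s, s * (k + 1) = 1 - m := ⟨(1 - m) / (k + 1), by field_simp⟩
  have hs0 : 0 < s := pos_of_mul_pos_left (hs ▸ sub_pos.2 hm1) (by positivity)
  have hks : m ≤ 1 - k * s := by linarith
  refine ⟨s, hs0, by linarith, fun w ↦ ?_⟩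
  rcases le_total (‖w‖ ^ 2) ((k + 1) * ⟪f, w⟫ ^ 2) with hnear | hfar
  · calc ‖T w‖ ≤ m * ‖w‖ := hm w hnear
      _ ≤ (1 - k * s) * ‖w‖ := by gcongr
      _ ≤ _ := mul_norm_le_norm_axialScaling hf (hm0.trans hks) (by nlinarith) w
  · refine (hT w).trans (le_of_sq_le_sq ?_ (norm_nonneg _))
    rw [norm_axialScaling_sq hf]
    calc ‖w‖ ^ 2 ≤ (1 + s) ^ 2 * ‖w‖ ^ 2 - s * (2 + s) * ((k + 1) * ⟪f, w⟫ ^ 2) := by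
          nlinarith [mul_le_mul_of_nonneg_left hfar (by positivity : 0 ≤ s * (2 + s))]
      _ ≤ (1 + s) ^ 2 * ‖w‖ ^ 2 - s * (2 + s - k * s) * ((k + 1) * ⟪f, w⟫ ^ 2) := by
          gcongr
          nlinarith
      _ = _ := by ring

lemma det_axialScaling_mem_Ioo [FiniteDimensional ℝ E] {f : E} (hf : ‖f‖ = 1) {s : ℝ}
    (hs : 0 < s) (hns : finrank ℝ E * s < 1) :
    (axialScaling f (1 - finrank ℝ E * s) (1 + s)).det ∈ Ioo 0 1 := by
  have : Nontrivial E := ⟨f, 0, by rintro rfl; simp at hf⟩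
  have hn : (1 : ℝ) ≤ finrank ℝ E := mod_cast finrank_pos (R := ℝ) (M := E)
  have hs1 : s < 1 := by nlinarith
  have hbernoulli : 1 - finrank ℝ E * s ≤ (1 - s) ^ finrank ℝ E := by
    simpa [sub_eq_add_neg] using one_add_mul_le_pow (a := -s) (by linarith) (finrank ℝ E)
  rw [det_axialScaling hf _ (by positivity)]
  refine ⟨mul_pos (div_pos (by linarith) (by positivity)) (by positivity), ?_⟩
  rw [div_mul_eq_mul_div, div_lt_one (by positivity)]
  calc (1 - finrank ℝ E * s) * (1 + s) ^ finrank ℝ E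
      ≤ (1 - s) ^ finrank ℝ E * (1 + s) ^ finrank ℝ E := by gcongr
    _ = (1 - s ^ 2) ^ finrank ℝ E := by rw [← mul_pow]; ring
    _ ≤ 1 := pow_le_one₀ (by nlinarith) (by nlinarith)
    _ < 1 + s := by linarith

end AxialScaling

section ContactSet

variable {E F : Type*} [NormedAddCommGroup E] [NormedSpace ℝ E] [NormedAddCommGroup F]
  [NormedSpace ℝ F]

/-- The vectors whose norm is preserved by `T`. For a contraction `T` on a Euclidean space, they are
the multiples of the unit vectors at which the ellipsoid `T '' closedBall 0 1` touches the unit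
sphere of `F`. -/
def contactSet (T : E →L[ℝ] F) : Set E :=
  {z | ‖T z‖ = ‖z‖}

lemma isClosed_contactSet (T : E →L[ℝ] F) : IsClosed (contactSet T) :=
  isClosed_eq (by fun_prop) (by fun_prop)

lemma smul_mem_contactSet {T : E →L[ℝ] F} {z : E} (hz : z ∈ contactSet T) (r : ℝ) :
    r • z ∈ contactSet T := by
  change ‖T (r • z)‖ = ‖r • z‖
  rw [map_smul, norm_smul, norm_smul, hz]

end ContactSet

/-- `T` maps the unit ball of `E` (a Euclidean ball in the application) onto a body of maximal
volume among the linear images of that ball inside the unit ball of `X`. Volumes are relative to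
`T`: passing from `T` to `T ∘L A` multiplies the volume by `|A.det|`. -/
def IsJohnPosition {E X : Type*} [NormedAddCommGroup E] [NormedSpace ℝ E]
    [NormedAddCommGroup X] [NormedSpace ℝ X] (T : E →L[ℝ] X) : Prop :=
  ‖T‖ ≤ 1 ∧ ∀ A : E →L[ℝ] E, ‖T ∘L A‖ ≤ 1 → |A.det| ≤ 1

section JohnPosition

variable {E X : Type*} [NormedAddCommGroup E] [NormedAddCommGroup X] [NormedSpace ℝ X]

theorem exists_isJohnPosition [NormedSpace ℝ E] [FiniteDimensional ℝ E] (S : E ≃L[ℝ] X) :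
    ∃ T : E ≃L[ℝ] X, IsJohnPosition (T : E →L[ℝ] X) := by
  let contractive : Set (E →L[ℝ] E) := {A | ‖(S : E →L[ℝ] X) ∘L A‖ ≤ 1}
  have hcompact : IsCompact contractive := by
    refine (isCompact_closedBall 0 ‖(S.symm : X →L[ℝ] E)‖).of_isClosed_subset
      (isClosed_le (by fun_prop) continuous_const) fun A hA ↦ mem_closedBall_zero_iff.2 ?_
    calc ‖A‖ = ‖(S.symm : X →L[ℝ] E) ∘L ((S : E →L[ℝ] X) ∘L A)‖ := by
          congr 1; ext; simp
      _ ≤ ‖(S.symm : X →L[ℝ] E)‖ * ‖(S : E →L[ℝ] X) ∘L A‖ := ContinuousLinearMap.opNorm_comp_le _ _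
      _ ≤ ‖(S.symm : X →L[ℝ] E)‖ := mul_le_of_le_one_right (norm_nonneg _) hA
  obtain ⟨A₀, hA₀, hA₀det⟩ : ∃ A ∈ contractive, A.det ≠ 0 := by
    refine ⟨(‖(S : E →L[ℝ] X)‖ + 1)⁻¹ • ContinuousLinearMap.id ℝ E, ?_, ?_⟩
    · have : 0 < ‖(S : E →L[ℝ] X)‖ + 1 := by positivity
      rw [mem_ofPred_eq, ContinuousLinearMap.comp_smul, ContinuousLinearMap.comp_id, norm_smul,
        norm_inv, Real.norm_of_nonneg this.le, inv_mul_le_iff₀ this]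
      linarith
    · change LinearMap.det (_ • LinearMap.id) ≠ 0
      rw [LinearMap.det_smul, LinearMap.det_id, mul_one]
      positivity
  obtain ⟨A, hA, hmax⟩ := hcompact.exists_isMaxOn ⟨A₀, hA₀⟩
    ContinuousLinearMap.continuous_det.abs.continuousOn
  have hAdet : 0 < |A.det| := (abs_pos.2 hA₀det).trans_le (hmax hA₀)
  refine ⟨(A.toContinuousLinearEquivOfDetNeZero (abs_pos.1 hAdet)).trans S, hA, fun B hB ↦ ?_⟩
  refine le_of_mul_le_mul_left ?_ hAdet
  calc |A.det| * |B.det| = |(A ∘L B).det| := by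
        rw [← abs_mul]
        exact congrArg abs (LinearMap.det_comp _ _).symm
    _ ≤ |A.det| := hmax (show A ∘L B ∈ contractive from hB)
    _ = |A.det| * 1 := (mul_one _).symm

namespace IsJohnPosition

lemma norm_map_le [NormedSpace ℝ E] {T : E →L[ℝ] X} (hT : IsJohnPosition T) (z : E) :
    ‖T z‖ ≤ ‖z‖ := by
  simpa using T.le_of_opNorm_le hT.1 z

lemma one_le_abs_det_of_norm_map_le [NormedSpace ℝ E] [FiniteDimensional ℝ E] {T : E →L[ℝ] X}
    (hT : IsJohnPosition T) {B : E →L[ℝ] E} (hB : B.det ≠ 0) (hTB : ∀ w, ‖T w‖ ≤ ‖B w‖) :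
    1 ≤ |B.det| := by
  let e : E ≃L[ℝ] E := B.toContinuousLinearEquivOfDetNeZero hB
  have hdet : |(e.symm : E →L[ℝ] E).det| ≤ 1 := by
    refine hT.2 _ (ContinuousLinearMap.opNorm_le_bound _ zero_le_one fun z ↦ ?_)
    calc ‖T (e.symm z)‖ ≤ ‖e (e.symm z)‖ := hTB _
      _ = 1 * ‖z‖ := by rw [e.apply_symm_apply, one_mul]
  rw [ContinuousLinearEquiv.det_coe_symm, abs_inv] at hdet
  exact (inv_le_one₀ (abs_pos.2 hB)).1 hdet

/-- A weak form of John's theorem on the contact points of the maximal ellipsoid. -/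
theorem span_contactSet_eq_top [InnerProductSpace ℝ E] [FiniteDimensional ℝ E] {T : E →L[ℝ] X}
    (hT : IsJohnPosition T) : Submodule.span ℝ (contactSet T) = ⊤ := by
  rw [← Submodule.orthogonal_eq_bot_iff]
  by_contra hne
  obtain ⟨g, hg, hg0⟩ := Submodule.exists_mem_ne_zero_of_ne_bot hne
  obtain ⟨f, hf, hf1⟩ : ∃ f ∈ (Submodule.span ℝ (contactSet T))ᗮ, ‖f‖ = 1 :=
    ⟨‖g‖⁻¹ • g, Submodule.smul_mem _ _ hg, by simp [norm_smul, hg0]⟩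
  obtain ⟨s, hs, hns, hle⟩ := exists_norm_map_le_norm_axialScaling hT.norm_map_le hf1
    (fun z hz ↦ Submodule.inner_left_of_mem_orthogonal (Submodule.subset_span hz) hf)
    (finrank ℝ E).cast_nonneg
  obtain ⟨hpos, hlt⟩ := det_axialScaling_mem_Ioo hf1 hs hns
  have hge := hT.one_le_abs_det_of_norm_map_le hpos.ne' hle
  rw [abs_of_pos hpos] at hge
  exact hge.not_gt hlt

end IsJohnPosition

end JohnPosition

/-- Day's one-sided parallelogram inequality, required of unit vectors only. -/
def DayInequality (X : Type*) [NormedAddCommGroup X] : Prop :=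
  ∀ u v : X, ‖u‖ = 1 → ‖v‖ = 1 → 4 ≤ ‖u + v‖ ^ 2 + ‖u - v‖ ^ 2

namespace DayInequality

variable {X : Type*} [NormedAddCommGroup X] [NormedSpace ℝ X]

lemma submodule (hX : DayInequality X) (V : Submodule ℝ X) : DayInequality V :=
  fun u v hu hv ↦ hX u v hu hv

lemma four_mul_norm_sq_le (hX : DayInequality X) {u v : X} (huv : ‖u‖ = ‖v‖) :
    4 * ‖u‖ ^ 2 ≤ ‖u + v‖ ^ 2 + ‖u - v‖ ^ 2 := by
  rcases eq_or_ne u 0 with rfl | hu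
  · calc 4 * ‖(0 : X)‖ ^ 2 = 0 := by simp
      _ ≤ _ := by positivity
  have hu' : ‖u‖ ≠ 0 := norm_ne_zero_iff.2 hu
  have h := hX (‖u‖⁻¹ • u) (‖u‖⁻¹ • v) (by simp [norm_smul, hu'])
    (by simp [norm_smul, ← huv, hu'])
  rw [← smul_add, ← smul_sub, norm_smul, norm_smul, mul_pow, mul_pow, norm_inv, norm_norm,
    ← mul_add, inv_pow, le_inv_mul_iff₀ (by positivity)] at h
  linarith

variable {E : Type*} [NormedAddCommGroup E] [InnerProductSpace ℝ E] {T : E →L[ℝ] X} {z w : E}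

lemma add_mem_contactSet_of_norm_eq (hX : DayInequality X) (hT : ∀ z, ‖T z‖ ≤ ‖z‖)
    (hz : z ∈ contactSet T) (hw : w ∈ contactSet T) (hzw : ‖z‖ = ‖w‖) :
    z + w ∈ contactSet T := by
  refine (hT _).antisymm (le_of_sq_le_sq ?_ (norm_nonneg _))
  have hDay : 4 * ‖z‖ ^ 2 ≤ ‖T (z + w)‖ ^ 2 + ‖T (z - w)‖ ^ 2 := by
    rw [map_add, map_sub, ← show ‖T z‖ = ‖z‖ from hz]
    exact hX.four_mul_norm_sq_le (hz.trans (hzw.trans hw.symm))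
  have hE : ‖z + w‖ ^ 2 + ‖z - w‖ ^ 2 = 4 * ‖z‖ ^ 2 := by
    have := parallelogram_law_with_norm ℝ z w
    rw [← hzw] at this
    linarith
  have hsub : ‖T (z - w)‖ ^ 2 ≤ ‖z - w‖ ^ 2 := pow_le_pow_left₀ (norm_nonneg _) (hT _) 2
  linarith

lemma openSegment_inter_contactSet_nonempty (hX : DayInequality X) (hT : ∀ z, ‖T z‖ ≤ ‖z‖)
    (hz : z ∈ contactSet T) (hw : w ∈ contactSet T) :
    (openSegment ℝ z w ∩ contactSet T).Nonempty := by
  rcases eq_or_ne z 0 with rfl | hz0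
  · exact ⟨(1 / 2 : ℝ) • w, ⟨1 / 2, 1 / 2, by norm_num, by norm_num, by norm_num, by simp⟩,
      smul_mem_contactSet hw _⟩
  rcases eq_or_ne w 0 with rfl | hw0
  · exact ⟨(1 / 2 : ℝ) • z, ⟨1 / 2, 1 / 2, by norm_num, by norm_num, by norm_num, by simp⟩,
      smul_mem_contactSet hz _⟩
  have hbisector : ‖w‖ • z + ‖z‖ • w ∈ contactSet T :=
    hX.add_mem_contactSet_of_norm_eq hT (smul_mem_contactSet hz _) (smul_mem_contactSet hw _)
      (by simp [norm_smul, mul_comm])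
  refine ⟨_, ⟨‖w‖ / (‖z‖ + ‖w‖), ‖z‖ / (‖z‖ + ‖w‖), by positivity, by positivity,
    by field_simp; ring, rfl⟩, ?_⟩
  convert smul_mem_contactSet hbisector (‖z‖ + ‖w‖)⁻¹ using 1
  simp only [smul_add, smul_smul, div_eq_inv_mul]

lemma add_mem_contactSet (hX : DayInequality X) (hT : ∀ z, ‖T z‖ ≤ ‖z‖)
    (hz : z ∈ contactSet T) (hw : w ∈ contactSet T) : z + w ∈ contactSet T := by
  have hconvex : Convex ℝ (contactSet T) :=
    convex_of_isClosed_of_openSegment_inter_nonempty (isClosed_contactSet T)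
      fun _ h₁ _ h₂ ↦ hX.openSegment_inter_contactSet_nonempty hT h₁ h₂
  have hmid := hconvex hz hw (by norm_num : (0 : ℝ) ≤ 1 / 2) (by norm_num : (0 : ℝ) ≤ 1 / 2)
    (by norm_num)
  convert smul_mem_contactSet hmid 2 using 1
  module

lemma norm_map_eq_of_isJohnPosition [FiniteDimensional ℝ E] (hX : DayInequality X)
    (hT : IsJohnPosition T) (z : E) : ‖T z‖ = ‖z‖ := by
  have hz : z ∈ Submodule.span ℝ (contactSet T) := hT.span_contactSet_eq_top ▸ Submodule.mem_top
  induction hz using Submodule.span_induction with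
  | mem _ hz => exact hz
  | zero => simp
  | add _ _ _ _ hz hw => exact hX.add_mem_contactSet hT.norm_map_le hz hw
  | smul r _ _ hz => exact smul_mem_contactSet hz r

theorem nonempty_linearIsometryEquiv [FiniteDimensional ℝ X] (hX : DayInequality X) :
    Nonempty (EuclideanSpace ℝ (Fin (finrank ℝ X)) ≃ₗᵢ[ℝ] X) := by
  obtain ⟨T, hT⟩ := exists_isJohnPosition (toEuclidean (E := X)).symm
  exact ⟨⟨T.toLinearEquiv, hX.norm_map_eq_of_isJohnPosition hT⟩⟩

theorem parallelogram_law (hX : DayInequality X) (u v : X) :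
    ‖u + v‖ ^ 2 + ‖u - v‖ ^ 2 = 2 * ‖u‖ ^ 2 + 2 * ‖v‖ ^ 2 := by
  let V : Submodule ℝ X := Submodule.span ℝ {u, v}
  have : FiniteDimensional ℝ V := FiniteDimensional.span_of_finite ℝ (toFinite _)
  let u' : V := ⟨u, Submodule.subset_span (by simp)⟩
  let v' : V := ⟨v, Submodule.subset_span (by simp)⟩
  obtain ⟨e⟩ := (hX.submodule V).nonempty_linearIsometryEquiv
  have h := parallelogram_law_with_norm ℝ (e.symm u') (e.symm v')
  simp only [← map_add, ← map_sub, LinearIsometryEquiv.norm_map] at h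
  change ‖u' + v'‖ ^ 2 + ‖u' - v'‖ ^ 2 = 2 * ‖u'‖ ^ 2 + 2 * ‖v'‖ ^ 2
  linarith

end DayInequality

lemma exists_mem_Ioo_lt_sqrt_of_sq_add_sq_lt {a b c : ℝ} (ha : 0 ≤ a) (hc : 0 ≤ c)
    (h : a ^ 2 + b ^ 2 < c ^ 2) :
    ∃ ε ∈ Ioo 0 c, a < ε ∧ b < √(c ^ 2 - ε ^ 2) := by
  obtain ⟨ε, haε, hε⟩ : ∃ ε, a < ε ∧ ε < √(c ^ 2 - b ^ 2) :=
    exists_between (Real.lt_sqrt_of_sq_lt (by linarith))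
  have hε0 : 0 < ε := ha.trans_lt haε
  have hεc : ε ^ 2 < c ^ 2 - b ^ 2 := (Real.lt_sqrt hε0.le).1 hε
  have hb2 : 0 ≤ b ^ 2 := sq_nonneg b
  exact ⟨ε, ⟨hε0, lt_of_pow_lt_pow_left₀ 2 hc (by linarith)⟩, haε,
    Real.lt_sqrt_of_sq_lt (by linarith)⟩

theorem exists_subhilbertian_pair_of_not_parallelogram_general
    {X : Type*} [NormedAddCommGroup X] [NormedSpace ℝ X]
    (hnotH : ∃ u v : X,
      ‖u + v‖ ^ 2 + ‖u - v‖ ^ 2 ≠ 2 * ‖u‖ ^ 2 + 2 * ‖v‖ ^ 2) :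
    ∃ ε ∈ Set.Ioo (0 : ℝ) 2, ∃ x₁ x₂ : X, ‖x₁‖ = 1 ∧ ‖x₂‖ = 1 ∧
      ‖x₁ - x₂‖ < ε ∧ ‖x₁ + x₂‖ < Real.sqrt (4 - ε ^ 2) := by
  obtain ⟨u, v, huv⟩ := hnotH
  have hX : ¬ DayInequality X := fun hX ↦ huv (hX.parallelogram_law u v)
  simp only [DayInequality, not_forall, not_le] at hX
  obtain ⟨x₁, x₂, hx₁, hx₂, hlt⟩ := hX
  have h4 : (2 : ℝ) ^ 2 = 4 := by norm_num
  obtain ⟨ε, hε, hsub, hadd⟩ := exists_mem_Ioo_lt_sqrt_of_sq_add_sq_lt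
    (norm_nonneg (x₁ - x₂)) zero_le_two (by linarith : _ + ‖x₁ + x₂‖ ^ 2 < _)
  exact ⟨ε, hε, x₁, x₂, hx₁, hx₂, hsub, h4 ▸ hadd⟩

/-- If the norm of the 2-dimensional real normed space `X` does not satisfy the
parallelogram law, then there are `ε ∈ (0, 2)` and unit vectors `x₁, x₂` with
`‖x₁ - x₂‖ < ε` and `‖x₁ + x₂‖ < √(4 - ε²)`. -/
theorem exists_subhilbertian_pair_of_not_parallelogram
    {X : Type*} [NormedAddCommGroup X] [NormedSpace ℝ X]
    (hX : Module.finrank ℝ X = 2)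
    (hnotH : ∃ u v : X,
      ‖u + v‖ ^ 2 + ‖u - v‖ ^ 2 ≠ 2 * ‖u‖ ^ 2 + 2 * ‖v‖ ^ 2) :
    ∃ ε ∈ Set.Ioo (0 : ℝ) 2, ∃ x₁ x₂ : X, ‖x₁‖ = 1 ∧ ‖x₂‖ = 1 ∧
      ‖x₁ - x₂‖ < ε ∧ ‖x₁ + x₂‖ < Real.sqrt (4 - ε ^ 2) :=
  exists_subhilbertian_pair_of_not_parallelogram_general hnotH
end

section
/- Let X and Y be 2-dimensional real normed spaces, identify X with ℝ² via a basis e₁, e₂, set γ̃(θ) = (cos θ · e₁ + sin θ · e₂)/‖cos θ · e₁ + sin θ · e₂‖, and let γ(θ) = γ̃(θ + θ₀), θ ∈ [0, π], be a half arc. Let T : X → Y be a bounded linear operator with ‖T‖ ≤ 1 on the endpoints in the following sense: ‖T(γ(0))‖ = 1, and let y* ∈ S_{Y*} satisfy y*(T(γ(0))) = 1. Suppose 0 < s₁ < s₃ < π are such that ‖T(γ(s₁))‖ < 1 and ‖T(γ(s₃))‖ < 1, and ‖T(γ(π))‖ = 1. Then |y*(T(γ(t)))| < 1 for every t ∈ [s₁,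 s₃]. -/
/-!
For a linear functional `f`, the set `{x | ‖x‖ ≤ f x}` is a convex cone, so the points of the unit
sphere at which `f` is at least `1` form an arc: with any two points less than `π` apart in angle,
the set contains the arc between them. Now let `f = y' ∘ T`, which equals `1` at the start `γ 0` of
the half arc and `-1` at its antipodal end. If `f ≥ 1` at some `γ t`, then `f ≥ 1` on all of
`[0, t]`, in particular at `s₁`; if `f ≤ -1` at `γ t`, then `-f ≥ 1` on all of `[t, π]`, in
particular at `s₃`.
-/

section Module

variable {X : Type*} [AddCommGroup X] [Module ℝ X]

/-- The vector at angle `θ` in the coordinates given by `e₁, e₂`, not yet scaled to the unit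
sphere. The pair `e₁, e₂` is arbitrary here. -/
noncomputable def planeDirection (e₁ e₂ : X) (θ : ℝ) : X :=
  Real.cos θ • e₁ + Real.sin θ • e₂

theorem planeDirection_add_pi (e₁ e₂ : X) (θ : ℝ) :
    planeDirection e₁ e₂ (θ + Real.pi) = -planeDirection e₁ e₂ θ := by
  simp only [planeDirection, Real.cos_add_pi, Real.sin_add_pi, neg_smul, neg_add]

theorem planeDirection_ne_zero {e₁ e₂ : X} (he : LinearIndependent ℝ ![e₁, e₂]) (θ : ℝ) :
    planeDirection e₁ e₂ θ ≠ 0 := by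
  intro h
  obtain ⟨hcos, hsin⟩ := LinearIndependent.pair_iff.1 he _ _ h
  simpa [hcos, hsin] using Real.sin_sq_add_cos_sq θ

theorem sin_sub_smul_planeDirection (e₁ e₂ : X) (p q r : ℝ) :
    Real.sin (r - p) • planeDirection e₁ e₂ q =
      Real.sin (r - q) • planeDirection e₁ e₂ p + Real.sin (q - p) • planeDirection e₁ e₂ r := by
  simp only [planeDirection, Real.sin_sub]
  module

theorem planeDirection_mem_convexCone_of_le_of_le {e₁ e₂ : X} (C : ConvexCone ℝ X) {p q r : ℝ}
    (hpq : p ≤ q) (hqr : q ≤ r) (hrp : r < p + Real.pi)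
    (hp : planeDirection e₁ e₂ p ∈ C) (hr : planeDirection e₁ e₂ r ∈ C) :
    planeDirection e₁ e₂ q ∈ C := by
  rcases hpq.eq_or_lt with rfl | hpq
  · exact hp
  rcases hqr.eq_or_lt with rfl | hqr
  · exact hr
  have sin_pos {a b : ℝ} (hpa : p ≤ a) (hab : a < b) (hbr : b ≤ r) : 0 < Real.sin (b - a) :=
    Real.sin_pos_of_pos_of_lt_pi (by linarith) (by linarith)
  rw [← C.smul_mem_iff (sin_pos le_rfl (hpq.trans hqr) le_rfl), sin_sub_smul_planeDirection]
  exact C.add_mem (C.smul_mem (sin_pos hpq.le hqr le_rfl) hp)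
    (C.smul_mem (sin_pos le_rfl hpq hqr.le) hr)

end Module

section SeminormedSpace

variable {X : Type*} [SeminormedAddCommGroup X] [NormedSpace ℝ X]

/-- The convex cone of the vectors on which the linear functional `f` dominates the norm. Its unit
vectors are those at which `f` is at least `1`. -/
def normDominatedCone (f : X →ₗ[ℝ] ℝ) : ConvexCone ℝ X where
  carrier := {x | ‖x‖ ≤ f x}
  smul_mem' c hc x hx := by
    rw [Set.mem_ofPred_eq, norm_smul_of_nonneg hc.le, map_smul, smul_eq_mul]
    exact mul_le_mul_of_nonneg_left hx hc.le
  add_mem' x hx y hy := by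
    rw [Set.mem_ofPred_eq, map_add]
    exact norm_add_le_of_le hx hy

theorem mem_normDominatedCone {f : X →ₗ[ℝ] ℝ} {x : X} : x ∈ normDominatedCone f ↔ ‖x‖ ≤ f x :=
  Iff.rfl

end SeminormedSpace

section NormedSpace

variable {X : Type*} [NormedAddCommGroup X] [NormedSpace ℝ X]

theorem one_le_map_normalize_iff (f : X →ₗ[ℝ] ℝ) {x : X} (hx : x ≠ 0) :
    1 ≤ f (NormedSpace.normalize x) ↔ x ∈ normDominatedCone f := by
  rw [mem_normDominatedCone, NormedSpace.normalize, map_smul, smul_eq_mul,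
    le_inv_mul_iff₀ (norm_pos_iff.2 hx), mul_one]

/-- The parametrization `γ̃` by angle of the unit sphere of the plane spanned by `e₁, e₂`. The
normed space `X` may be larger than that plane. -/
noncomputable def sphereCurve (e₁ e₂ : X) (θ : ℝ) : X :=
  NormedSpace.normalize (planeDirection e₁ e₂ θ)

theorem sphereCurve_add_pi (e₁ e₂ : X) (θ : ℝ) :
    sphereCurve e₁ e₂ (θ + Real.pi) = -sphereCurve e₁ e₂ θ := by
  rw [sphereCurve, planeDirection_add_pi, NormedSpace.normalize_neg, sphereCurve]

theorem one_le_map_sphereCurve_of_le_of_le {e₁ e₂ : X} (he : LinearIndependent ℝ ![e₁, e₂])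
    (f : X →ₗ[ℝ] ℝ) {p q r : ℝ} (hpq : p ≤ q) (hqr : q ≤ r) (hrp : r < p + Real.pi)
    (hp : 1 ≤ f (sphereCurve e₁ e₂ p)) (hr : 1 ≤ f (sphereCurve e₁ e₂ r)) :
    1 ≤ f (sphereCurve e₁ e₂ q) := by
  have mem_cone_iff (θ : ℝ) := one_le_map_normalize_iff f (planeDirection_ne_zero he θ)
  exact (mem_cone_iff q).2 <| planeDirection_mem_convexCone_of_le_of_le _ hpq hqr hrp
    ((mem_cone_iff p).1 hp) ((mem_cone_iff r).1 hr)

theorem functional_strictly_less_on_middle_arc_general {e₁ e₂ : X}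
    (he : LinearIndependent ℝ ![e₁, e₂]) (f : X →ₗ[ℝ] ℝ) {θ₀ θ₁ θ₃ : ℝ}
    (hθ₁ : θ₀ < θ₁) (hθ₃ : θ₃ < θ₀ + Real.pi) (h₀ : 1 ≤ f (sphereCurve e₁ e₂ θ₀))
    (h₁ : f (sphereCurve e₁ e₂ θ₁) < 1) (h₃ : -1 < f (sphereCurve e₁ e₂ θ₃)) :
    ∀ θ ∈ Set.Icc θ₁ θ₃, |f (sphereCurve e₁ e₂ θ)| < 1 := by
  rintro θ ⟨hθ₁θ, hθθ₃⟩
  have h_end : 1 ≤ (-f) (sphereCurve e₁ e₂ (θ₀ + Real.pi)) := by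
    simpa only [sphereCurve_add_pi, LinearMap.neg_apply, map_neg, neg_neg] using h₀
  rw [abs_lt]
  constructor
  · by_contra! hθ
    have h_neg : 1 ≤ (-f) (sphereCurve e₁ e₂ θ₃) :=
      one_le_map_sphereCurve_of_le_of_le he (-f) hθθ₃ hθ₃.le (by linarith)
        (le_neg_of_le_neg hθ) h_end
    exact h₃.not_ge (le_neg_of_le_neg h_neg)
  · by_contra! hθ
    exact h₁.not_ge (one_le_map_sphereCurve_of_le_of_le he f hθ₁.le hθ₁θ (by linarith) h₀ hθ)

end NormedSpace

/-- Let `X, Y` be 2-dimensional real normed spaces, `γ` a half arc, and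
`T : X → Y` a bounded linear operator with `‖T (γ 0)‖ = ‖T (γ π)‖ = 1`. Let
`y' ∈ S_{Y*}` satisfy `y'(T (γ 0)) = 1`, and suppose `0 < s₁ < s₃ < π` are such
that `‖T (γ s₁)‖ < 1` and `‖T (γ s₃)‖ < 1`. Then `|y'(T (γ t))| < 1` for every
`t ∈ [s₁, s₃]`. -/
theorem functional_strictly_less_on_middle_arc
    {X Y : Type*} [NormedAddCommGroup X] [NormedSpace ℝ X]
    [NormedAddCommGroup Y] [NormedSpace ℝ Y]
    (hX : Module.finrank ℝ X = 2) (hY : Module.finrank ℝ Y = 2)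
    (e₁ e₂ : X) (hbasis : LinearIndependent ℝ ![e₁, e₂])
    (θ₀ : ℝ) (γ : ℝ → X)
    (hγ : ∀ θ : ℝ, γ θ =
      ‖Real.cos (θ + θ₀) • e₁ + Real.sin (θ + θ₀) • e₂‖⁻¹ •
        (Real.cos (θ + θ₀) • e₁ + Real.sin (θ + θ₀) • e₂))
    (T : X →L[ℝ] Y)
    (h0 : ‖T (γ 0)‖ = 1) (hπ : ‖T (γ Real.pi)‖ = 1)
    (y' : Y →L[ℝ] ℝ) (hy' : ‖y'‖ = 1) (hy'T : y' (T (γ 0)) = 1)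
    (s₁ s₃ : ℝ) (hs₁ : 0 < s₁) (hs₁₃ : s₁ < s₃) (hs₃ : s₃ < Real.pi)
    (h1 : ‖T (γ s₁)‖ < 1) (h3 : ‖T (γ s₃)‖ < 1) :
    ∀ t ∈ Set.Icc s₁ s₃, |y' (T (γ t))| < 1 := by
  obtain rfl : γ = fun θ => sphereCurve e₁ e₂ (θ + θ₀) := funext hγ
  have abs_map_le_norm (x : X) : |y' (T x)| ≤ ‖T x‖ := by
    simpa only [one_mul, Real.norm_eq_abs] using y'.le_of_opNorm_le hy'.le (T x)
  rintro t ⟨ht₁, ht₃⟩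
  exact functional_strictly_less_on_middle_arc_general hbasis (y'.comp T : X →ₗ[ℝ] ℝ)
    (by linarith) (by linarith) hy'T.ge (lt_of_abs_lt ((abs_map_le_norm _).trans_lt h1))
    (neg_lt_of_abs_lt ((abs_map_le_norm _).trans_lt h3)) (t + θ₀) ⟨by linarith, by linarith⟩
end
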